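/- For every integer r ≥ 1 there exists a positive integer N such that for all n ≥ N, (-1)^(r-1) Δ^r log p(n) < log(1 + (√6·π/6)·(1/2)_{r-1}/(n+1)^(r-1/2)), where (a)_k denotes the rising factorial. -/

import Mathlib

/-!
With `y = n - 1 / 24` and `b = (√6 * π / 6) * √y`, the circle method gives
`p(n) = exp (2 * b) / (4 * √3 * y) * (1 - 1 / (2 * b)) + O(exp (139 / 70 * b))`: near its
singularity at `1` the generating function is controlled by the modular transformation of the
Dedekind eta function, and the saddle point integral that appears there is, up to an exponentially
small error, a Gaussian integral. Hence `log p(n)` is `(√6 * π / 3) * √y - log y` plus a constant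
and negative powers of `√y`, and by the mean value theorem `(-1) ^ m * Δ ^ (m + 1) log p(n)` is
`a * (n + 1) ^ (-(m + 1 / 2)) - m! * n ^ (-(m + 1))` up to `o(n ^ (-(m + 1)))`, where `a` is
`(√6 * π / 6) * (1 / 2)_m`. The term with `-m!` comes from `-log y`, and it beats the loss
`t ^ 2 / 2` in `log (1 + t) > t - t ^ 2 / 2`.
-/

open Filter Topology Finset Asymptotics
open scoped Real

section AbsoluteEvaluation

open PowerSeries

variable {R ι : Type*} [NormedCommRing R] {f g : R⟦X⟧} {q s t : R}

/-- The power series `f`, evaluated at `q`, converges absolutely with sum `s`. -/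
def HasAbsSumAt (f : R⟦X⟧) (q s : R) : Prop :=
  (Summable fun n ↦ ‖coeff n f * q ^ n‖) ∧ HasSum (fun n ↦ coeff n f * q ^ n) s

lemma HasAbsSumAt.one : HasAbsSumAt (1 : R⟦X⟧) q 1 := by
  have hcoeff : ∀ n ∉ ({0} : Finset ℕ), coeff n (1 : R⟦X⟧) * q ^ n = 0 := by
    intro n hn
    simp [coeff_one, mem_singleton.not.1 hn]
  refine ⟨summable_of_ne_finset_zero (s := {0}) fun n hn ↦ by rw [hcoeff n hn, norm_zero], ?_⟩
  simpa using hasSum_sum_of_ne_finset_zero hcoeff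

lemma HasAbsSumAt.mul (hf : HasAbsSumAt f q s) (hg : HasAbsSumAt g q t) :
    HasAbsSumAt (f * g) q (s * t) := by
  have hcoeff : ∀ n, coeff n (f * g) * q ^ n =
      ∑ kl ∈ antidiagonal n, (coeff kl.1 f * q ^ kl.1) * (coeff kl.2 g * q ^ kl.2) := by
    intro n
    rw [coeff_mul, sum_mul]
    refine sum_congr rfl fun kl hkl ↦ ?_
    rw [← mem_antidiagonal.1 hkl]
    ring
  refine ⟨(summable_norm_sum_mul_antidiagonal_of_summable_norm hf.1 hg.1).congr
    fun n ↦ by rw [hcoeff], ?_⟩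
  rw [← hf.2.tsum_eq, ← hg.2.tsum_eq,
    tsum_mul_tsum_eq_tsum_sum_antidiagonal_of_summable_norm' hf.1 hf.2.summable hg.1
      hg.2.summable]
  exact (summable_sum_mul_antidiagonal_of_summable_norm' hf.1 hf.2.summable hg.1
    hg.2.summable).hasSum.congr_fun hcoeff

lemma HasAbsSumAt.prod {f : ι → R⟦X⟧} {s : ι → R} (h : ∀ i, HasAbsSumAt (f i) q (s i))
    (S : Finset ι) : HasAbsSumAt (∏ i ∈ S, f i) q (∏ i ∈ S, s i) :=
  prod_hom_rel (r := fun F x ↦ HasAbsSumAt F q x) .one fun i _ _ ↦ (h i).mul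

end AbsoluteEvaluation

section GeneratingFunction

open PowerSeries PowerSeries.WithPiTopology

lemma coeff_tsum_X_pow_mul {R : Type*} [CommRing R] [TopologicalSpace R] [IsTopologicalRing R]
    [T2Space R] {d : ℕ} (hd : d ≠ 0) (n : ℕ) :
    coeff n (∑' j, (X : R⟦X⟧) ^ (d * j)) = if d ∣ n then 1 else 0 := by
  have hsum : Summable fun j ↦ (X : R⟦X⟧) ^ (d * j) := by
    simp_rw [pow_mul]
    exact summable_pow_of_constantCoeff_eq_zero (by simp [hd])
  refine ((hasSum_iff_hasSum_coeff R).1 hsum.hasSum n).unique ?_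
  simp only [coeff_X_pow]
  split_ifs with hdn
  · obtain ⟨k, rfl⟩ := hdn
    simpa [hd, eq_comm] using hasSum_ite_eq k (1 : R)
  · convert! hasSum_zero with j
    exact if_neg fun h ↦ hdn ⟨j, h⟩

lemma hasAbsSumAt_tsum_X_pow_mul {𝕜 : Type*} [NormedField 𝕜] [CompleteSpace 𝕜] {q : 𝕜}
    (hq : ‖q‖ < 1) {d : ℕ} (hd : d ≠ 0) :
    HasAbsSumAt (∑' j, (X : 𝕜⟦X⟧) ^ (d * j)) q (1 - q ^ d)⁻¹ := by
  have hcoeff (n : ℕ) : coeff n (∑' j, (X : 𝕜⟦X⟧) ^ (d * j)) * q ^ n =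
      if d ∣ n then q ^ n else 0 := by
    rw [coeff_tsum_X_pow_mul hd, ite_mul, one_mul, zero_mul]
  refine ⟨?_, ?_⟩
  · refine (summable_geometric_of_lt_one (norm_nonneg q) hq).of_nonneg_of_le
      (fun _ ↦ norm_nonneg _) fun n ↦ ?_
    rw [hcoeff]
    split_ifs <;> simp
  · have hinj : Function.Injective (d * ·) := mul_right_injective₀ hd
    refine ((hinj.hasSum_iff (f := fun n ↦ if d ∣ n then q ^ n else 0) ?_).1 ?_).congr_fun hcoeff
    · exact fun n hn ↦ if_neg fun ⟨k, hk⟩ ↦ hn ⟨k, hk.symm⟩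
    · have hqd : ‖q ^ d‖ < 1 := norm_pow q d ▸ pow_lt_one₀ (norm_nonneg q) hq hd
      simpa [Function.comp_def, pow_mul] using hasSum_geometric_of_norm_lt_one hqd

/-- The number of partitions of `n` into parts of size at most `M`. -/
def boundedPartitionCount (M n : ℕ) : ℕ := #(Nat.Partition.restricted n (· ≤ M))

lemma boundedPartitionCount_of_le {M n : ℕ} (h : n ≤ M) :
    boundedPartitionCount M n = Fintype.card n.Partition := by
  rw [boundedPartitionCount, Nat.Partition.restricted, filter_true_of_mem, card_univ]
  exact fun _ _ _ hi ↦ (Nat.Partition.le_of_mem_parts hi).trans h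

lemma boundedPartitionCount_le (M n : ℕ) :
    boundedPartitionCount M n ≤ Fintype.card n.Partition :=
  card_le_univ _

lemma powerSeriesMk_boundedPartitionCount (R : Type*) [CommRing R] [TopologicalSpace R]
    [IsTopologicalRing R] [T2Space R] (M : ℕ) :
    PowerSeries.mk (fun n ↦ (boundedPartitionCount M n : R)) =
      ∏ i ∈ range M, ∑' j, (X : R⟦X⟧) ^ ((i + 1) * j) := by
  unfold boundedPartitionCount
  rw [Nat.Partition.powerSeriesMk_card_restricted_eq_tprod R (· ≤ M), tprod_eq_prod (s := range M)]
  · exact prod_congr rfl fun i hi ↦ if_pos (by simpa using hi)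
  · exact fun i hi ↦ if_neg (by simpa using hi)

lemma hasSum_boundedPartitionCount {𝕜 : Type*} [NormedField 𝕜] [CompleteSpace 𝕜] {q : 𝕜}
    (hq : ‖q‖ < 1) (M : ℕ) :
    HasSum (fun n ↦ (boundedPartitionCount M n : 𝕜) * q ^ n)
      (∏ i ∈ range M, (1 - q ^ (i + 1)))⁻¹ := by
  have h := (HasAbsSumAt.prod (fun i ↦ hasAbsSumAt_tsum_X_pow_mul hq i.succ_ne_zero) (range M)).2
  simpa only [Nat.succ_eq_add_one, ← powerSeriesMk_boundedPartitionCount, coeff_mk,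
    prod_inv_distrib] using h

/-- The Euler function `q ↦ ∏_{n ≥ 1} (1 - q ^ n)`; its inverse generates the partition numbers. -/
noncomputable def eulerProduct (q : ℂ) : ℂ := ∏' n : ℕ, (1 - q ^ (n + 1))

variable {q : ℂ}

lemma eulerProduct_ne_zero (hq : ‖q‖ < 1) : eulerProduct q ≠ 0 := by
  have hne (n : ℕ) : 1 + -q ^ (n + 1) ≠ 0 := by
    rw [← sub_eq_add_neg, sub_ne_zero]
    refine fun h ↦ (pow_lt_one₀ (norm_nonneg q) hq n.succ_ne_zero).ne ?_
    rw [← norm_pow, Nat.succ_eq_add_one, ← h, norm_one]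
  simpa only [eulerProduct, sub_eq_add_neg] using tprod_one_add_ne_zero_of_summable hne
    (by simpa using
      (summable_nat_add_iff 1).2 (summable_geometric_of_lt_one (norm_nonneg q) hq))

lemma tendsto_prod_one_sub_pow (hq : ‖q‖ < 1) :
    Tendsto (fun M ↦ ∏ i ∈ range M, (1 - q ^ (i + 1))) atTop (𝓝 (eulerProduct q)) :=
  (ModularForm.multipliable_one_sub_pow hq).hasProd.tendsto_prod_nat

lemma summable_card_partition {x : ℝ} (hx : 0 ≤ x) (hx1 : x < 1) :
    Summable fun n ↦ (Fintype.card n.Partition : ℝ) * x ^ n := by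
  have hq : ‖(x : ℂ)‖ < 1 := by rwa [Complex.norm_of_nonneg hx]
  have hsum (M : ℕ) : HasSum (fun n ↦ (boundedPartitionCount M n : ℝ) * x ^ n)
      (∏ i ∈ range M, (1 - (x : ℂ) ^ (i + 1)))⁻¹.re := by
    simpa [← Complex.ofReal_natCast, ← Complex.ofReal_pow] using
      Complex.hasSum_re (hasSum_boundedPartitionCount hq M)
  refine summable_of_sum_range_le (c := (eulerProduct x)⁻¹.re) (fun n ↦ by positivity)
    fun N ↦ ge_of_tendsto ((Complex.continuous_re.tendsto _).comp
      ((tendsto_prod_one_sub_pow hq).inv₀ (eulerProduct_ne_zero hq))) ?_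
  filter_upwards [eventually_ge_atTop N] with M hM
  calc ∑ n ∈ range N, (Fintype.card n.Partition : ℝ) * x ^ n
      = ∑ n ∈ range N, (boundedPartitionCount M n : ℝ) * x ^ n := sum_congr rfl fun n hn ↦ by
        rw [boundedPartitionCount_of_le ((mem_range.1 hn).le.trans hM)]
    _ ≤ _ := sum_le_hasSum _ (fun n _ ↦ by positivity) (hsum M)

/-- The bounded partition counts increase to the partition numbers, so dominated convergence
passes to the limit in their generating functions. -/
lemma hasSum_card_partition (hq : ‖q‖ < 1) :
    HasSum (fun n ↦ (Fintype.card n.Partition : ℂ) * q ^ n) (eulerProduct q)⁻¹ := by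
  have hsum := summable_card_partition (norm_nonneg q) hq
  have hlim : Tendsto (fun M ↦ ∑' n, (boundedPartitionCount M n : ℂ) * q ^ n) atTop
      (𝓝 (∑' n, (Fintype.card n.Partition : ℂ) * q ^ n)) := by
    refine tendsto_tsum_of_dominated_convergence hsum (fun n ↦ ?_)
      (Eventually.of_forall fun M n ↦ ?_)
    · refine tendsto_const_nhds.congr' ?_
      filter_upwards [eventually_ge_atTop n] with M hM
      rw [boundedPartitionCount_of_le hM]
    · rw [norm_mul, norm_pow, Complex.norm_natCast]
      gcongr
      exact boundedPartitionCount_le M n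
  simp only [(hasSum_boundedPartitionCount hq _).tsum_eq] at hlim
  rw [tendsto_nhds_unique
    ((tendsto_prod_one_sub_pow hq).inv₀ (eulerProduct_ne_zero hq)) hlim]
  refine (Summable.of_norm_bounded hsum fun n ↦ ?_).hasSum
  rw [norm_mul, norm_pow, Complex.norm_natCast]

end GeneratingFunction

section CauchyIntegral

open Complex

lemma integral_exp_natCast_sub_mul (α : ℝ) (n k : ℕ) :
    ∫ θ in (-π)..π, cexp (((n : ℂ) - k) * (α + θ * I)) = if k = n then 2 * (π : ℂ) else 0 := by
  by_cases h : k = n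
  · simp only [h, if_true, sub_self, zero_mul, Complex.exp_zero, intervalIntegral.integral_const,
      sub_neg_eq_add, real_smul, mul_one]
    push_cast
    ring
  · have hnk : ((n : ℂ) - k) * I ≠ 0 :=
      mul_ne_zero (sub_ne_zero.2 (by exact_mod_cast Ne.symm h)) I_ne_zero
    have hperiod : cexp (((n : ℂ) - k) * I * (π : ℝ)) =
        cexp (((n : ℂ) - k) * I * ((-π : ℝ) : ℂ)) := by
      rw [Complex.exp_eq_exp_iff_exists_int]
      refine ⟨(n : ℤ) - k, ?_⟩
      push_cast
      ring
    have hsplit (θ : ℝ) : cexp (((n : ℂ) - k) * (α + θ * I)) =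
        cexp (((n : ℂ) - k) * α) * cexp (((n : ℂ) - k) * I * θ) := by
      rw [← Complex.exp_add]
      ring_nf
    simp_rw [hsplit]
    rw [if_neg h, intervalIntegral.integral_const_mul,
      integral_exp_mul_complex hnk, hperiod, sub_self,
      zero_div, mul_zero]

lemma hasSum_integral_mul_exp {a : ℕ → ℂ} {α : ℝ}
    (ha : Summable fun k ↦ ‖a k‖ * Real.exp (-α) ^ k) (n : ℕ) :
    HasSum (fun k ↦ ∫ θ in (-π)..π, a k * cexp (((n : ℂ) - k) * (α + θ * I)))
      (∫ θ in (-π)..π, (∑' k, a k * cexp (-(α + θ * I)) ^ k) * cexp (n * (α + θ * I))) := by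
  have hnorm (k : ℕ) (θ : ℝ) :
      ‖a k * cexp (-(α + θ * I)) ^ k‖ = ‖a k‖ * Real.exp (-α) ^ k := by
    simp [norm_exp]
  have hexp (k : ℕ) (θ : ℝ) : a k * cexp (((n : ℂ) - k) * (α + θ * I)) =
      a k * cexp (-(α + θ * I)) ^ k * cexp (n * (α + θ * I)) := by
    rw [mul_assoc, ← Complex.exp_nat_mul, ← Complex.exp_add]
    congr 2
    ring
  refine intervalIntegral.hasSum_integral_of_dominated_convergence
    (fun k _ ↦ ‖a k‖ * Real.exp (-α) ^ k * Real.exp (n * α))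
    (fun k ↦ Continuous.aestronglyMeasurable (by fun_prop))
    (fun k ↦ .of_forall fun θ _ ↦ ?_) (.of_forall fun θ _ ↦ ha.mul_right _)
    intervalIntegrable_const (.of_forall fun θ _ ↦ ?_)
  · rw [hexp, norm_mul, hnorm, norm_exp]
    simp
  · have hθ : Summable fun k ↦ a k * cexp (-(α + θ * I)) ^ k :=
      .of_norm (ha.congr fun k ↦ (hnorm k θ).symm)
    exact (hθ.hasSum.mul_right _).congr_fun fun k ↦ hexp k θ

lemma integral_tsum_mul_exp {a : ℕ → ℂ} {α : ℝ}
    (ha : Summable fun k ↦ ‖a k‖ * Real.exp (-α) ^ k) (n : ℕ) :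
    ∫ θ in (-π)..π, (∑' k, a k * cexp (-(α + θ * I)) ^ k) * cexp (n * (α + θ * I)) =
      2 * π * a n := by
  rw [← (hasSum_integral_mul_exp ha n).tsum_eq, tsum_eq_single n]
  · rw [intervalIntegral.integral_const_mul, integral_exp_natCast_sub_mul, if_pos rfl, mul_comm]
  · intro k hk
    rw [intervalIntegral.integral_const_mul, integral_exp_natCast_sub_mul, if_neg hk, mul_zero]

/-- The integrand of the Cauchy formula for `p n` on the circle of radius `exp (-α)`, in the
coordinate `z = α + θ * I` for which `q = exp (-z)`. -/
noncomputable def cauchyIntegrand (n : ℕ) (z : ℂ) : ℂ :=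
  (eulerProduct (cexp (-z)))⁻¹ * cexp (n * z)

lemma norm_exp_neg_lt_one {z : ℂ} (hz : 0 < z.re) : ‖cexp (-z)‖ < 1 := by
  simpa [norm_exp] using hz

lemma integral_cauchyIntegrand {α : ℝ} (hα : 0 < α) (n : ℕ) :
    ∫ θ in (-π)..π, cauchyIntegrand n (α + θ * I) = 2 * π * Fintype.card n.Partition := by
  have hsum : Summable fun k ↦ ‖(Fintype.card k.Partition : ℂ)‖ * Real.exp (-α) ^ k := by
    simpa only [Complex.norm_natCast] using
      summable_card_partition (Real.exp_pos _).le (Real.exp_lt_one_iff.2 (neg_neg_of_pos hα))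
  rw [← integral_tsum_mul_exp hsum]
  refine intervalIntegral.integral_congr fun θ _ ↦ ?_
  simp only [cauchyIntegrand,
    (hasSum_card_partition (norm_exp_neg_lt_one (z := α + θ * I) (by simpa))).tsum_eq]

lemma differentiableOn_eulerProduct : DifferentiableOn ℂ eulerProduct (Metric.ball 0 1) :=
  ModularForm.differentiableOn_tprod_one_sub_pow

lemma continuous_cauchyIntegrand {α : ℝ} (hα : 0 < α) (n : ℕ) :
    Continuous fun θ : ℝ ↦ cauchyIntegrand n (α + θ * I) := by
  have hq (θ : ℝ) : ‖cexp (-(α + θ * I))‖ < 1 := norm_exp_neg_lt_one (by simpa)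
  refine .mul (.inv₀ ?_ fun θ ↦ eulerProduct_ne_zero (hq θ)) (by fun_prop)
  exact differentiableOn_eulerProduct.continuousOn.comp_continuous (by fun_prop)
    fun θ ↦ mem_ball_zero_iff.2 (hq θ)

end CauchyIntegral

section EulerProduct

open Complex

/-- Termwise comparison of the series of `-log (1 - w)` and `-log (1 - ‖w‖)`; the linear term is
what makes the bound better than `1 - ‖w‖ ≤ ‖1 - w‖`. -/
lemma one_sub_norm_mul_exp_le {w : ℂ} (hw : ‖w‖ < 1) :
    (1 - ‖w‖) * Real.exp (‖w‖ - w.re) ≤ ‖1 - w‖ := by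
  have hseries := (hasSum_re (hasSum_taylorSeries_neg_log (z := (‖w‖ : ℂ)) (by simpa))).sub
    (hasSum_re (hasSum_taylorSeries_neg_log hw))
  have hlinear := le_hasSum hseries 1 fun n _ ↦ by
    have hterm : ((‖w‖ : ℂ) ^ n / n).re = ‖w ^ n / n‖ := by
      rw [norm_div, norm_pow, Complex.norm_natCast]
      norm_cast
    rw [hterm, sub_nonneg]
    exact re_le_norm _
  have hpos : 0 < ‖1 - w‖ := norm_pos_iff.2 (sub_ne_zero.2 fun h ↦ by simp [← h] at hw)
  have hpos' : 0 < 1 - ‖w‖ := sub_pos.2 hw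
  have habs : ‖1 - (‖w‖ : ℂ)‖ = 1 - ‖w‖ := by
    rw [← ofReal_one, ← ofReal_sub, norm_real, Real.norm_of_nonneg hpos'.le]
  rw [pow_one, pow_one, Nat.cast_one, div_one, div_one, ofReal_re, neg_re, neg_re, log_re,
    log_re, habs] at hlinear
  rw [← Real.log_le_log_iff (by positivity) hpos, Real.log_mul hpos'.ne' (Real.exp_pos _).ne',
    Real.log_exp]
  linarith

variable {q : ℂ}

lemma hasSum_pow_succ {𝕜 : Type*} [NormedDivisionRing 𝕜] {x : 𝕜} (hx : ‖x‖ < 1) :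
    HasSum (fun i : ℕ ↦ x ^ (i + 1)) (x / (1 - x)) := by
  simpa only [pow_succ', div_eq_mul_inv] using (hasSum_geometric_of_norm_lt_one hx).mul_left x

lemma norm_eulerProduct_ge (hq : ‖q‖ < 1) :
    ‖eulerProduct ‖q‖‖ * Real.exp (‖q‖ / (1 - ‖q‖) - (q / (1 - q)).re) ≤ ‖eulerProduct q‖ := by
  have hgeom : HasSum (fun i : ℕ ↦ ‖q‖ ^ (i + 1) - (q ^ (i + 1)).re)
      (‖q‖ / (1 - ‖q‖) - (q / (1 - q)).re) :=
    (hasSum_pow_succ (x := ‖q‖) (by rwa [norm_norm])).sub (hasSum_re (hasSum_pow_succ hq))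
  refine le_of_tendsto_of_tendsto' ((tendsto_prod_one_sub_pow (by simpa)).norm.mul
    ((Real.continuous_exp.tendsto _).comp hgeom.tendsto_sum_nat))
    (tendsto_prod_one_sub_pow hq).norm fun M ↦ ?_
  rw [Function.comp_apply, Real.exp_sum, norm_prod, norm_prod, ← prod_mul_distrib]
  refine prod_le_prod (fun i _ ↦ by positivity) fun i _ ↦ ?_
  have hpow : ‖q ^ (i + 1)‖ < 1 := norm_pow q _ ▸ pow_lt_one₀ (norm_nonneg q) hq i.succ_ne_zero
  have hfactor : ‖(1 : ℂ) - (‖q‖ : ℂ) ^ (i + 1)‖ = 1 - ‖q ^ (i + 1)‖ := by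
    rw [← ofReal_pow, ← norm_pow, ← ofReal_one, ← ofReal_sub, norm_real,
      Real.norm_of_nonneg (sub_nonneg.2 hpow.le)]
  rw [hfactor, ← norm_pow]
  exact one_sub_norm_mul_exp_le hpow

lemma norm_eulerProduct_inv_le (hq : ‖q‖ < 1) :
    ‖(eulerProduct q)⁻¹‖ ≤ ‖(eulerProduct ‖q‖)⁻¹‖ *
      Real.exp (‖q‖ / ‖1 - q‖ - ‖q‖ / (1 - ‖q‖)) := by
  have hpos : 0 < ‖eulerProduct ‖q‖‖ := norm_pos_iff.2 (eulerProduct_ne_zero (by simpa))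
  have hre : (q / (1 - q)).re ≤ ‖q‖ / ‖1 - q‖ := norm_div q (1 - q) ▸ re_le_norm _
  rw [norm_inv, norm_inv, ← neg_sub, Real.exp_neg, ← mul_inv]
  refine inv_anti₀ (by positivity) (le_trans ?_ (norm_eulerProduct_ge hq))
  gcongr

lemma isBigO_eulerProduct_inv_sub_one :
    (fun q ↦ (eulerProduct q)⁻¹ - 1) =O[𝓝 0] (fun q : ℂ ↦ q) := by
  have h0 : eulerProduct 0 = 1 := by simp [eulerProduct]
  have hdiff : DifferentiableAt ℂ (fun q ↦ (eulerProduct q)⁻¹) 0 :=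
    (differentiableOn_eulerProduct.differentiableAt (Metric.ball_mem_nhds _ one_pos)).inv
      (by simp [h0])
  simpa [h0] using hdiff.isBigO_sub

end EulerProduct

section ModularInversion

open Complex

lemma sqrt_mul_I {x : ℂ} (hx : 0 < x.re) : Complex.sqrt (x * I) =
    x ^ (2⁻¹ : ℂ) * Complex.sqrt I := by
  have hx0 : x ≠ 0 := fun h ↦ by simp [h] at hx
  have harg := abs_lt.1 (abs_arg_lt_pi_div_two_iff.2 (Or.inl hx))
  have hlog : log (x * I) = log x + log I := by
    rw [log_mul_eq_add_log_iff hx0 I_ne_zero, arg_I]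
    constructor <;> linarith [Real.pi_pos]
  rw [Complex.sqrt, Complex.sqrt, cpow_def_of_ne_zero (mul_ne_zero hx0 I_ne_zero), hlog, add_mul,
    Complex.exp_add, cpow_def_of_ne_zero hx0, cpow_def_of_ne_zero I_ne_zero]

lemma eta_eq_exp_mul_eulerProduct (τ : ℂ) :
    ModularForm.eta τ = cexp (2 * π * I * τ / 24) * eulerProduct (cexp (2 * π * I * τ)) := by
  simp [ModularForm.eta, eulerProduct, ModularForm.eta_q_eq_pow, Function.Periodic.qParam]

lemma re_ofReal_div_pos {c : ℝ} (hc : 0 < c) {z : ℂ} (hz : 0 < z.re) : 0 < ((c : ℂ) / z).re := by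
  have hz0 : 0 < normSq z := normSq_pos.2 fun h ↦ by simp [h] at hz
  rw [div_eq_mul_inv, re_ofReal_mul, inv_re]
  positivity

/-- The transformation `τ ↦ -1 / τ` of the Dedekind eta function, at `τ = z * I / (2 * π)`. -/
lemma eulerProduct_inv_exp_neg {z : ℂ} (hz : 0 < z.re) :
    (eulerProduct (cexp (-z)))⁻¹ = (z / (2 * π)) ^ (2⁻¹ : ℂ) *
      cexp (π ^ 2 / (6 * z) - z / 24) * (eulerProduct (cexp (-(4 * π ^ 2 / z))))⁻¹ := by
  have hz0 : z ≠ 0 := fun h ↦ by simp [h] at hz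
  have hpi : (π : ℂ) ≠ 0 := ofReal_ne_zero.2 Real.pi_ne_zero
  set x : ℂ := z / (2 * π) with hx
  have hxre : 0 < x.re := by
    rw [hx, ← ofReal_ofNat, ← ofReal_mul, div_ofReal_re]
    positivity
  have hq : 2 * π * I * (x * I) = -z := by
    linear_combination (2 * π * x) * I_sq - mul_div_cancel₀ z (mul_ne_zero two_ne_zero hpi)
  have hq' : 2 * π * I * (-1 / (x * I)) = -(4 * π ^ 2 / z) := by
    rw [hx]
    field_simp
    ring
  have hτ : x * I ∈ UpperHalfPlane.upperHalfPlaneSet := by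
    simpa [UpperHalfPlane.upperHalfPlaneSet] using hxre
  have hinv := ModularForm.eta_comp_eq_csqrt_I_inv hτ
  simp only [Function.comp_apply, Pi.smul_apply, Pi.mul_apply, smul_eq_mul,
    eta_eq_exp_mul_eulerProduct, hq, hq', sqrt_mul_I hxre] at hinv
  have hsqrt : Complex.sqrt I ≠ 0 := by simp [Complex.sqrt]
  have hne := eulerProduct_ne_zero (norm_exp_neg_lt_one hz)
  have hne' : eulerProduct (cexp (-(4 * π ^ 2 / z))) ≠ 0 := by
    refine eulerProduct_ne_zero (norm_exp_neg_lt_one ?_)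
    have hre := re_ofReal_div_pos (c := 4 * π ^ 2) (by positivity) hz
    rwa [ofReal_mul, ofReal_pow, ofReal_ofNat] at hre
  have hexp : cexp (π ^ 2 / (6 * z) - z / 24) * cexp (-(4 * π ^ 2 / z) / 24) =
      cexp (-z / 24) := by
    rw [← Complex.exp_add]
    congr 1
    field_simp
    ring
  rw [← hexp] at hinv
  field_simp at hinv ⊢
  linear_combination hinv

end ModularInversion

section TruncatedGaussian

open MeasureTheory

variable {b : ℝ}

/-- Integration by parts, through the primitive `s * exp (-b * s ^ 2)`. -/
lemma integral_one_sub_sq_mul_gaussian (hb : b ≠ 0) :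
    ∫ s in (-1 : ℝ)..1, (1 - s ^ 2) * Real.exp (-b * s ^ 2) =
      (1 - 1 / (2 * b)) * (∫ s in (-1 : ℝ)..1, Real.exp (-b * s ^ 2)) + Real.exp (-b) / b := by
  have hderiv (s : ℝ) : HasDerivAt (fun s : ℝ ↦ s * Real.exp (-b * s ^ 2))
      ((1 - 2 * b * s ^ 2) * Real.exp (-b * s ^ 2)) s := by
    convert! (hasDerivAt_id s).mul (((hasDerivAt_pow 2 s).const_mul (-b)).exp) using 1
    simp only [id, Nat.cast_ofNat, Nat.add_one_sub_one, pow_one]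
    ring
  have hparts := intervalIntegral.integral_eq_sub_of_hasDerivAt (a := -1) (b := 1)
    (fun s _ ↦ hderiv s) (Continuous.intervalIntegrable (by fun_prop) _ _)
  have hsplit (s : ℝ) : (1 - s ^ 2) * Real.exp (-b * s ^ 2) =
      (1 - 1 / (2 * b)) * Real.exp (-b * s ^ 2) +
        1 / (2 * b) * ((1 - 2 * b * s ^ 2) * Real.exp (-b * s ^ 2)) := by
    field_simp
    ring
  simp_rw [hsplit]
  rw [intervalIntegral.integral_add (Continuous.intervalIntegrable (by fun_prop) _ _)
    (Continuous.intervalIntegrable (by fun_prop) _ _), intervalIntegral.integral_const_mul,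
    intervalIntegral.integral_const_mul, hparts]
  ring_nf

lemma abs_integral_gaussian_sub_le (hb : 1 ≤ b) :
    |(∫ s in (-1 : ℝ)..1, Real.exp (-b * s ^ 2)) - √(π / b)| ≤ √π * Real.exp (1 - b) := by
  have hint := integrable_exp_neg_mul_sq (one_pos.trans_le hb)
  have hint_one := integrable_exp_neg_mul_sq one_pos
  have hsplit := integral_add_compl (s := Set.Ioc (-1 : ℝ) 1) measurableSet_Ioc hint
  rw [integral_gaussian] at hsplit
  rw [intervalIntegral.integral_of_le (by norm_num), ← hsplit, sub_add_cancel_left, abs_neg,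
    abs_of_nonneg (integral_nonneg fun _ ↦ (Real.exp_pos _).le)]
  calc ∫ s in (Set.Ioc (-1 : ℝ) 1)ᶜ, Real.exp (-b * s ^ 2)
      ≤ ∫ s in (Set.Ioc (-1 : ℝ) 1)ᶜ, Real.exp (1 - b) * Real.exp (-1 * s ^ 2) := by
        refine setIntegral_mono_on hint.integrableOn (hint_one.const_mul _).integrableOn
          measurableSet_Ioc.compl fun s hs ↦ ?_
        have hs2 : 1 ≤ s ^ 2 := by
          rw [one_le_sq_iff_one_le_abs, le_abs]
          by_contra! h
          exact hs ⟨by linarith, by linarith⟩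
        rw [← Real.exp_add, Real.exp_le_exp]
        nlinarith
    _ ≤ ∫ s, Real.exp (1 - b) * Real.exp (-1 * s ^ 2) :=
        setIntegral_le_integral (hint_one.const_mul _) (.of_forall fun _ ↦ by positivity)
    _ = √π * Real.exp (1 - b) := by
        rw [integral_const_mul, integral_gaussian, div_one, mul_comm]

lemma abs_integral_one_sub_sq_mul_gaussian_sub_le (hb : 1 ≤ b) :
    |(∫ s in (-1 : ℝ)..1, (1 - s ^ 2) * Real.exp (-b * s ^ 2)) -
      √(π / b) * (1 - 1 / (2 * b))| ≤ (√π + 1) * Real.exp (1 - b) := by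
  have hb0 : 0 < b := one_pos.trans_le hb
  have hfactor : |1 - 1 / (2 * b)| ≤ 1 := by
    have hle : 1 / (2 * b) ≤ 1 := (div_le_one (by positivity)).2 (by linarith)
    have hpos : 0 < 1 / (2 * b) := by positivity
    exact abs_le.2 ⟨by linarith, by linarith⟩
  have hboundary : |Real.exp (-b) / b| ≤ Real.exp (1 - b) := by
    rw [abs_of_nonneg (by positivity)]
    exact (div_le_self (Real.exp_pos _).le hb).trans (Real.exp_le_exp.2 (by linarith))
  calc _ = |(1 - 1 / (2 * b)) * ((∫ s in (-1 : ℝ)..1, Real.exp (-b * s ^ 2)) - √(π / b)) +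
        Real.exp (-b) / b| := by
        rw [integral_one_sub_sq_mul_gaussian hb0.ne']
        ring_nf
    _ ≤ |1 - 1 / (2 * b)| * |(∫ s in (-1 : ℝ)..1, Real.exp (-b * s ^ 2)) - √(π / b)| +
        |Real.exp (-b) / b| := by
        rw [← abs_mul]
        exact abs_add_le _ _
    _ ≤ 1 * (√π * Real.exp (1 - b)) + Real.exp (1 - b) := by
        gcongr
        exact abs_integral_gaussian_sub_le hb
    _ = (√π + 1) * Real.exp (1 - b) := by ring

end TruncatedGaussian

section SaddlePoint

open Complex

variable {b : ℝ} {w : ℂ}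

/-- The integrand of the saddle point integral for the partition numbers; the exponent has its
saddle point at `w = 1`. -/
noncomputable def saddleKernel (b : ℝ) (w : ℂ) : ℂ := w ^ (2⁻¹ : ℂ) * cexp (b * (w + w⁻¹))

lemma mem_ball_two_two_iff : w ∈ Metric.ball (2 : ℂ) 2 ↔ normSq w < 4 * w.re := by
  rw [mem_ball_iff_norm, ← sq_lt_sq₀ (norm_nonneg _) zero_le_two, Complex.sq_norm, normSq_sub,
    show normSq 2 = 4 by norm_num [normSq_apply], show w * (starRingEnd ℂ) 2 = (2 : ℝ) * w by
      rw [conj_ofNat, mul_comm, ofReal_ofNat], re_ofReal_mul]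
  constructor <;> intro h <;> linarith

lemma differentiableOn_saddleKernel (b : ℝ) :
    DifferentiableOn ℂ (saddleKernel b) (Metric.ball (2 : ℂ) 2) := by
  intro w hw
  have hre : 0 < w.re := by linarith [mem_ball_two_two_iff.1 hw, normSq_nonneg w]
  have hw0 : w ≠ 0 := fun h ↦ by simp [h] at hre
  exact ((differentiableAt_id.cpow_const (Or.inl hre)).mul
    ((differentiableAt_id.add (differentiableAt_id.inv hw0)).const_mul
      _).cexp).differentiableWithinAt

lemma norm_saddleKernel_le (hb : 0 ≤ b) {t : ℝ} (hw : ‖w‖ ≤ 4) (ht : (w + w⁻¹).re ≤ t) :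
    ‖saddleKernel b w‖ ≤ 2 * Real.exp (t * b) := by
  have hsqrt : ‖w ^ (2⁻¹ : ℂ)‖ ≤ 2 := by
    have hpow := cpow_nat_inv_pow w two_ne_zero
    rw [Nat.cast_ofNat] at hpow
    refine le_of_sq_le_sq ?_ zero_le_two
    rw [← norm_pow, hpow]
    linarith
  rw [saddleKernel, norm_mul, norm_exp, re_ofReal_mul, mul_comm t]
  gcongr

lemma saddleKernel_exp_mul_I {φ : ℝ} (hφ : φ ∈ Set.Ioo (-π) π) :
    saddleKernel b (cexp (φ * I)) =
      (Real.exp (2 * b * Real.cos φ) : ℝ) * cexp (φ / 2 * I) := by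
  have hlog : log (cexp (φ * I)) = φ * I :=
    log_exp (by simpa using hφ.1) (by simpa using hφ.2.le)
  rw [saddleKernel, cpow_def_of_ne_zero (Complex.exp_ne_zero _), hlog, ← Complex.exp_neg,
    ofReal_exp, mul_comm]
  push_cast
  congr 2
  · rw [← neg_mul]
    linear_combination (-b : ℂ) * two_cos φ
  · ring

/-- On the unit circle, `s = 2 * sin (φ / 2)` turns the saddle point integral into a Gaussian. -/
lemma im_saddleKernel_exp_mul_I {φ : ℝ} (hφ : φ ∈ Set.Ioo (-π) π) :
    (saddleKernel b (cexp (φ * I)) * (cexp (φ * I) * I)).im =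
      Real.exp (2 * b) * ((1 - (2 * Real.sin (φ / 2)) ^ 2) *
        Real.exp (-b * (2 * Real.sin (φ / 2)) ^ 2)) * Real.cos (φ / 2) := by
  have hrot : cexp (φ / 2 * I) * (cexp (φ * I) * I) =
      I * cexp ((3 * (φ / 2) : ℝ) * I) := by
    rw [← mul_assoc, ← Complex.exp_add, mul_comm]
    push_cast
    ring_nf
  have hcos : Real.cos φ = 1 - 2 * Real.sin (φ / 2) ^ 2 := by
    rw [← Real.cos_two_mul_eq_one_sub, mul_div_cancel₀ _ two_ne_zero]
  rw [saddleKernel_exp_mul_I hφ, mul_assoc, hrot, im_ofReal_mul, I_mul_im, exp_ofReal_mul_I_re,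
    Real.cos_three_mul, hcos]
  have hexp : Real.exp (2 * b * (1 - 2 * Real.sin (φ / 2) ^ 2)) =
      Real.exp (2 * b) * Real.exp (-b * (2 * Real.sin (φ / 2)) ^ 2) := by
    rw [← Real.exp_add]
    ring_nf
  rw [hexp]
  linear_combination 4 * Real.exp (2 * b) * Real.exp (-b * (2 * Real.sin (φ / 2)) ^ 2) *
    Real.cos (φ / 2) * Real.sin_sq_add_cos_sq (φ / 2)

lemma integral_im_saddleKernel_exp_mul_I (b : ℝ) :
    ∫ φ in (-(π / 3))..(π / 3), (saddleKernel b (cexp (φ * I)) * (cexp (φ * I) * I)).im =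
      Real.exp (2 * b) * ∫ s in (-1 : ℝ)..1, (1 - s ^ 2) * Real.exp (-b * s ^ 2) := by
  have hsubst (φ : ℝ) : HasDerivAt (fun φ ↦ 2 * Real.sin (φ / 2)) (Real.cos (φ / 2)) φ := by
    convert! (((hasDerivAt_id φ).div_const 2).sin.const_mul 2) using 1
    simp only [id]
    ring
  have hchange := intervalIntegral.integral_comp_mul_deriv (a := -(π / 3)) (b := π / 3)
    (g := fun s ↦ Real.exp (2 * b) * ((1 - s ^ 2) * Real.exp (-b * s ^ 2)))
    (fun φ _ ↦ hsubst φ) (by fun_prop) (by fun_prop)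
  have hend : 2 * Real.sin (π / 3 / 2) = 1 := by
    rw [div_div, show (3 : ℝ) * 2 = 6 by norm_num, Real.sin_pi_div_six]
    norm_num
  rw [neg_div, Real.sin_neg, mul_neg, hend] at hchange
  rw [← intervalIntegral.integral_const_mul, ← hchange]
  refine intervalIntegral.integral_congr fun φ hφ ↦ im_saddleKernel_exp_mul_I ?_
  rw [Set.uIcc_of_le (by linarith [Real.pi_pos])] at hφ
  exact ⟨by linarith [hφ.1, Real.pi_pos], by linarith [hφ.2, Real.pi_pos]⟩

lemma exp_pi_div_three_mul_I : cexp ((π / 3 : ℝ) * I) = 1 / 2 + (√3 / 2 : ℝ) * I := by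
  rw [exp_mul_I, ← ofReal_cos, ← ofReal_sin, Real.cos_pi_div_three, Real.sin_pi_div_three]
  push_cast
  rfl

lemma exp_neg_pi_div_three_mul_I :
    cexp ((-(π / 3) : ℝ) * I) = 1 / 2 + (-(√3 / 2) : ℝ) * I := by
  rw [exp_mul_I, ← ofReal_cos, ← ofReal_sin, Real.cos_neg, Real.sin_neg, Real.cos_pi_div_three,
    Real.sin_pi_div_three]
  push_cast
  rfl

section Primitive

variable {H : ℂ → ℂ} (hH : ∀ w ∈ Metric.ball (2 : ℂ) 2, HasDerivAt H (saddleKernel b w) w)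
include hH

lemma I_mul_integral_saddleKernel_vertical {y : ℝ} (hy : ∀ s ∈ Set.uIcc (-y) y, s ^ 2 ≤ 3 / 4) :
    I * ∫ s in (-y)..y, saddleKernel b (1 + s * I) = H (1 + y * I) - H (1 + (-y : ℝ) * I) := by
  have hmem : ∀ s ∈ Set.uIcc (-y) y, (1 + s * I : ℂ) ∈ Metric.ball (2 : ℂ) 2 := by
    intro s hs
    have := hy s hs
    rw [mem_ball_two_two_iff, normSq_apply]
    simp
    nlinarith
  rw [← intervalIntegral.integral_const_mul]
  refine intervalIntegral.integral_eq_sub_of_hasDerivAt (f := fun s : ℝ ↦ H (1 + s * I))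
    (fun s hs ↦ ?_) (ContinuousOn.intervalIntegrable (continuousOn_const.mul ?_))
  · have hline : HasDerivAt (fun s : ℝ ↦ (1 + s * I : ℂ)) I s := by
      simpa using ((hasDerivAt_id s).ofReal_comp.mul_const I).const_add 1
    simpa using! (hH _ (hmem s hs)).scomp s hline
  · exact (differentiableOn_saddleKernel b).continuousOn.comp (by fun_prop) hmem

lemma im_sub_im_saddleKernel_arc :
    (H (cexp ((π / 3 : ℝ) * I))).im - (H (cexp ((-(π / 3) : ℝ) * I))).im =
      Real.exp (2 * b) * ∫ s in (-1 : ℝ)..1, (1 - s ^ 2) * Real.exp (-b * s ^ 2) := by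
  have hmem : ∀ φ ∈ Set.uIcc (-(π / 3)) (π / 3), cexp (φ * I) ∈ Metric.ball (2 : ℂ) 2 := by
    intro φ hφ
    rw [Set.uIcc_of_le (by linarith [Real.pi_pos])] at hφ
    have hcos : 1 / 2 ≤ Real.cos φ := by
      rw [← Real.cos_pi_div_three, ← Real.cos_abs φ]
      exact Real.cos_le_cos_of_nonneg_of_le_pi (abs_nonneg φ) (by linarith [Real.pi_pos])
        (abs_le.2 hφ)
    rw [mem_ball_two_two_iff, normSq_eq_norm_sq, norm_exp_ofReal_mul_I, exp_ofReal_mul_I_re]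
    linarith
  rw [← integral_im_saddleKernel_exp_mul_I]
  refine (intervalIntegral.integral_eq_sub_of_hasDerivAt
    (f := fun φ : ℝ ↦ (H (cexp (φ * I))).im) (fun φ hφ ↦ ?_) ?_).symm
  · have harc : HasDerivAt (fun φ : ℝ ↦ cexp (φ * I)) (cexp (φ * I) * I) φ := by
      simpa using ((hasDerivAt_id φ).ofReal_comp.mul_const I).cexp
    simpa [mul_comm] using!
      imCLM.hasFDerivAt.comp_hasDerivAt φ ((hH _ (hmem φ hφ)).scomp φ harc)
  · refine ContinuousOn.intervalIntegrable (continuous_im.comp_continuousOn (.mul ?_ (by fun_prop)))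
    exact (differentiableOn_saddleKernel b).continuousOn.comp (by fun_prop) hmem

lemma norm_sub_saddleKernel_horizontal_le (hb : 0 ≤ b) {y : ℝ} (hy : y ^ 2 = 3 / 4) :
    ‖H (1 + y * I) - H (1 / 2 + y * I)‖ ≤ Real.exp (7 / 4 * b) := by
  have hnormSq : ∀ w ∈ Set.Icc (1 / 2 : ℝ) 1 ×ℂ {y}, normSq w = w.re ^ 2 + 3 / 4 := by
    rintro w ⟨-, rfl : w.im = y⟩
    rw [normSq_apply, ← hy]
    ring
  have hmem : ∀ w ∈ Set.Icc (1 / 2 : ℝ) 1 ×ℂ {y}, w ∈ Metric.ball (2 : ℂ) 2 := by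
    intro w hw
    rw [mem_ball_two_two_iff, hnormSq w hw]
    nlinarith [hw.1.1, hw.1.2]
  have hbound : ∀ w ∈ Set.Icc (1 / 2 : ℝ) 1 ×ℂ {y},
      ‖saddleKernel b w‖ ≤ 2 * Real.exp (7 / 4 * b) := by
    intro w hw
    have hre : w.re ∈ Set.Icc (1 / 2 : ℝ) 1 := hw.1
    refine norm_saddleKernel_le hb ?_ ?_
    · refine le_of_sq_le_sq ?_ zero_le_four
      rw [← normSq_eq_norm_sq, hnormSq w hw]
      nlinarith [hre.1, hre.2]
    · rw [add_re, inv_re, hnormSq w hw, ← le_sub_iff_add_le', div_le_iff₀ (by positivity)]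
      nlinarith [sq_nonneg (w.re - 1), sq_nonneg (w.re - 1 / 2),
        mul_nonneg (sub_nonneg.2 hre.1) (sub_nonneg.2 hre.2)]
  have hconvex : Convex ℝ (Set.Icc (1 / 2 : ℝ) 1 ×ℂ {y}) :=
    ((convex_Icc _ _).linear_preimage reLm).inter ((convex_singleton y).linear_preimage imLm)
  have hmvt := hconvex.norm_image_sub_le_of_norm_hasDerivWithin_le
    (fun w hw ↦ (hH w (hmem w hw)).hasDerivWithinAt) hbound
    (x := 1 / 2 + y * I) (y := 1 + y * I) (by simp [mem_reProdIm]; norm_num)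
    (by simp [mem_reProdIm]; norm_num)
  refine hmvt.trans_eq ?_
  norm_num
  ring

end Primitive

/-- The vertical segment is deformed into two horizontal segments, on which the integrand is small,
and an arc of the unit circle. -/
lemma abs_re_integral_saddleKernel_sub_le (hb : 0 ≤ b) :
    |(∫ s in (-(√3 / 2))..(√3 / 2), saddleKernel b (1 + s * I)).re -
      Real.exp (2 * b) * ∫ s in (-1 : ℝ)..1, (1 - s ^ 2) * Real.exp (-b * s ^ 2)| ≤
      2 * Real.exp (7 / 4 * b) := by
  obtain ⟨H, hH⟩ := (differentiableOn_saddleKernel b).isExactOn_ball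
  have hsq : (√3 / 2) ^ 2 = (3 / 4 : ℝ) := by
    rw [div_pow, Real.sq_sqrt zero_le_three]
    norm_num
  have hvert := congrArg Complex.im (I_mul_integral_saddleKernel_vertical hH (y := √3 / 2)
    fun s hs ↦ by
      rw [Set.uIcc_of_le (by linarith [Real.sqrt_nonneg 3])] at hs
      exact hsq ▸ sq_le_sq' hs.1 hs.2)
  rw [I_mul_im, sub_im] at hvert
  have harc := im_sub_im_saddleKernel_arc hH
  rw [exp_pi_div_three_mul_I, exp_neg_pi_div_three_mul_I] at harc
  have hupper := (abs_im_le_norm _).trans (norm_sub_saddleKernel_horizontal_le hH hb hsq)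
  have hlower := (abs_im_le_norm _).trans
    (norm_sub_saddleKernel_horizontal_le hH hb ((neg_sq (√3 / 2)).trans hsq))
  rw [sub_im, abs_le] at hupper hlower
  rw [hvert, ← harc, abs_le]
  constructor <;> linarith [hupper.1, hupper.2, hlower.1, hlower.2]

lemma isBigO_re_integral_saddleKernel_sub :
    (fun b ↦ (∫ s in (-(√3 / 2))..(√3 / 2), saddleKernel b (1 + s * I)).re -
      Real.exp (2 * b) * (√(π / b) * (1 - 1 / (2 * b)))) =O[atTop]
      fun b ↦ Real.exp (7 / 4 * b) := by
  refine .of_bound (2 + (√π + 1) * Real.exp 1) ?_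
  filter_upwards [eventually_ge_atTop 1] with b hb
  rw [Real.norm_eq_abs, Real.norm_of_nonneg (Real.exp_pos _).le, add_mul]
  refine (abs_sub_le _ _ _).trans
    (add_le_add (abs_re_integral_saddleKernel_sub_le (by linarith)) ?_)
  rw [← mul_sub, abs_mul, Real.abs_exp]
  calc _ ≤ Real.exp (2 * b) * ((√π + 1) * Real.exp (1 - b)) := by
        gcongr
        exact abs_integral_one_sub_sq_mul_gaussian_sub_le hb
    _ = (√π + 1) * Real.exp (1 + b) := by
        rw [mul_left_comm, ← Real.exp_add]
        ring_nf
    _ ≤ (√π + 1) * Real.exp (1 + 7 / 4 * b) := by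
        gcongr
        linarith
    _ = (√π + 1) * Real.exp 1 * Real.exp (7 / 4 * b) := by rw [Real.exp_add, mul_assoc]

end SaddlePoint

section CircleMethod

open Complex

/-- The parameter `b` for which the `n`-th Cauchy integrand, put on the scale of its saddle point,
is governed by `saddleKernel b`. -/
noncomputable def partitionSaddle (n : ℕ) : ℝ := √6 * π / 6 * √(n - 1 / 24)

/-- The abscissa of the vertical segment of integration in the circle method for the `n`-th
partition number, which is the saddle point of the leading part of the integrand. -/
noncomputable def partitionAbscissa (n : ℕ) : ℝ := π ^ 2 / (6 * partitionSaddle n)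

/-- The first term of the Hardy–Ramanujan–Rademacher series for the `n`-th partition number,
without its exponentially small second half. -/
noncomputable def partitionMainTerm (n : ℕ) : ℝ :=
  Real.exp (2 * partitionSaddle n) / (4 * √3 * (n - 1 / 24)) * (1 - 1 / (2 * partitionSaddle n))

section Scale

variable {n : ℕ}

lemma natCast_sub_one_div_pos (hn : n ≠ 0) : 0 < (n - 1 / 24 : ℝ) := by
  have : (1 : ℝ) ≤ n := Nat.one_le_cast.2 (Nat.one_le_iff_ne_zero.2 hn)
  linarith

lemma partitionSaddle_pos (hn : n ≠ 0) : 0 < partitionSaddle n := by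
  have := natCast_sub_one_div_pos hn
  rw [partitionSaddle]
  positivity

lemma partitionSaddle_sq (hn : n ≠ 0) : partitionSaddle n ^ 2 = π ^ 2 / 6 * (n - 1 / 24) := by
  rw [partitionSaddle, mul_pow, div_pow, mul_pow, Real.sq_sqrt (by norm_num),
    Real.sq_sqrt (natCast_sub_one_div_pos hn).le]
  ring

lemma tendsto_partitionSaddle : Tendsto partitionSaddle atTop atTop := by
  refine Tendsto.const_mul_atTop (by positivity) (Real.tendsto_sqrt_atTop.comp ?_)
  exact tendsto_atTop_add_const_right _ _ tendsto_natCast_atTop_atTop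

lemma partitionAbscissa_pos (hn : n ≠ 0) : 0 < partitionAbscissa n := by
  have := partitionSaddle_pos hn
  rw [partitionAbscissa]
  positivity

lemma partitionAbscissa_mul_partitionSaddle (hn : n ≠ 0) :
    partitionAbscissa n * partitionSaddle n = π ^ 2 / 6 := by
  have := (partitionSaddle_pos hn).ne'
  rw [partitionAbscissa]
  field_simp

lemma partitionAbscissa_mul_sub (hn : n ≠ 0) :
    partitionAbscissa n * (n - 1 / 24) = partitionSaddle n := by
  refine mul_right_cancel₀ (partitionSaddle_pos hn).ne' ?_
  rw [mul_right_comm, partitionAbscissa_mul_partitionSaddle hn, ← partitionSaddle_sq hn, sq]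

lemma tendsto_partitionAbscissa : Tendsto partitionAbscissa atTop (𝓝 0) :=
  (tendsto_partitionSaddle.const_mul_atTop (by norm_num : (0 : ℝ) < 6)).const_div_atTop _

end Scale

section MajorArc

lemma ofReal_mul_cpow {a : ℝ} (ha : 0 ≤ a) (w r : ℂ) : (a * w) ^ r = (a : ℂ) ^ r * w ^ r := by
  rcases eq_or_ne r 0 with rfl | hr
  · simp only [cpow_zero, mul_one]
  rcases ha.eq_or_lt with rfl | ha
  · rw [ofReal_zero, zero_mul, zero_cpow hr, zero_mul]
  rcases eq_or_ne w 0 with rfl | hw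
  · rw [mul_zero, zero_cpow hr, mul_zero]
  have ha0 : (a : ℂ) ≠ 0 := ofReal_ne_zero.2 ha.ne'
  rw [cpow_def_of_ne_zero (mul_ne_zero ha0 hw), cpow_def_of_ne_zero ha0, cpow_def_of_ne_zero hw,
    log_ofReal_mul ha hw, ← ofReal_log ha.le, add_mul, Complex.exp_add]

lemma ofReal_mul_cpow_two_inv {a : ℝ} (ha : 0 ≤ a) (w : ℂ) :
    (a * w) ^ (2⁻¹ : ℂ) = (√a : ℝ) * w ^ (2⁻¹ : ℂ) := by
  rw [ofReal_mul_cpow ha, Real.sqrt_eq_rpow, ofReal_cpow ha, one_div, ofReal_inv, ofReal_ofNat]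

lemma cauchyIntegrand_partitionAbscissa_mul {n : ℕ} (hn : n ≠ 0) {w : ℂ} (hw : 0 < w.re) :
    cauchyIntegrand n (partitionAbscissa n * w) =
      (√(partitionAbscissa n / (2 * π)) : ℝ) * (saddleKernel (partitionSaddle n) w *
        (eulerProduct (cexp (-(24 * partitionSaddle n * w⁻¹))))⁻¹) := by
  have hα := partitionAbscissa_pos hn
  have hα0 : (partitionAbscissa n : ℂ) ≠ 0 := ofReal_ne_zero.2 hα.ne'
  have hw0 : w ≠ 0 := by
    rintro rfl
    exact hw.ne rfl
  have hprod : (partitionAbscissa n : ℂ) * partitionSaddle n = π ^ 2 / 6 :=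
    mod_cast partitionAbscissa_mul_partitionSaddle hn
  have hsub : (partitionAbscissa n : ℂ) * (n - 1 / 24) = partitionSaddle n := by
    rw [← partitionAbscissa_mul_sub hn]
    push_cast
    rfl
  have hinv : (π ^ 2 / (6 * (partitionAbscissa n * w)) : ℂ) = partitionSaddle n * w⁻¹ := by
    field_simp
    linear_combination (-6 : ℂ) * hprod
  have hscale : (partitionAbscissa n * w / (2 * π) : ℂ) =
      ((partitionAbscissa n / (2 * π) : ℝ) : ℂ) * w := by
    push_cast
    ring
  have hdual : (4 * π ^ 2 / (partitionAbscissa n * w) : ℂ) = 24 * partitionSaddle n * w⁻¹ := by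
    linear_combination 24 * hinv
  have hexp : (π ^ 2 / (6 * (partitionAbscissa n * w)) - partitionAbscissa n * w / 24 +
      n * (partitionAbscissa n * w) : ℂ) = partitionSaddle n * (w + w⁻¹) := by
    linear_combination hinv + w * hsub
  rw [cauchyIntegrand, eulerProduct_inv_exp_neg (by rw [re_ofReal_mul]; positivity), hscale, hdual,
    ofReal_mul_cpow_two_inv (by positivity), saddleKernel, ← hexp, Complex.exp_add]
  ring

lemma eventually_norm_eulerProduct_inv_exp_sub_one_le : ∀ᶠ b : ℝ in atTop, ∀ v : ℂ,
    4 / 7 ≤ v.re → ‖(eulerProduct (cexp (-(24 * b * v))))⁻¹ - 1‖ ≤ Real.exp (-b) := by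
  obtain ⟨c, hc, hbound⟩ := isBigO_eulerProduct_inv_sub_one.exists_pos
  obtain ⟨ε, hε, hball⟩ := Metric.eventually_nhds_iff_ball.1 hbound.bound
  have hexp {k : ℝ} (hk : 0 < k) : Tendsto (fun b : ℝ ↦ Real.exp (-(k * b))) atTop (𝓝 0) :=
    Real.tendsto_exp_neg_atTop_nhds_zero.comp (tendsto_id.const_mul_atTop hk)
  filter_upwards [eventually_ge_atTop 0, (hexp (k := 13) (by norm_num)).eventually_lt_const hε,
    (hexp (k := 12) (by norm_num)).eventually_lt_const (inv_pos.2 hc)] with b hb hball_b hc_b v hv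
  have hq : ‖cexp (-(24 * b * v))‖ ≤ Real.exp (-(13 * b)) := by
    rw [norm_exp, Real.exp_le_exp, neg_re, show (24 * b * v : ℂ) = ((24 * b : ℝ) : ℂ) * v by
      push_cast; rfl, re_ofReal_mul]
    nlinarith
  calc _ ≤ c * ‖cexp (-(24 * b * v))‖ := hball _ (mem_ball_zero_iff.2 (hq.trans_lt hball_b))
    _ ≤ c * Real.exp (-(13 * b)) := by gcongr
    _ = c * Real.exp (-(12 * b)) * Real.exp (-b) := by
        rw [mul_assoc, ← Real.exp_add]
        ring_nf
    _ ≤ Real.exp (-b) := by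
        refine mul_le_of_le_one_left (Real.exp_pos _).le ?_
        rw [← mul_inv_cancel₀ hc.ne']
        gcongr

lemma inv_one_add_mul_I_re (s : ℝ) : ((1 + s * I : ℂ)⁻¹).re = 1 / (1 + s ^ 2) := by
  rw [inv_re, normSq_apply]
  simp [sq]

variable {b s : ℝ}

lemma norm_saddleKernel_one_add_mul_I_le (hb : 0 ≤ b) (hs : s ^ 2 ≤ 3 / 4) :
    ‖saddleKernel b (1 + s * I)‖ ≤ 2 * Real.exp (2 * b) := by
  refine norm_saddleKernel_le hb ?_ ?_
  · refine le_of_sq_le_sq ?_ zero_le_four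
    rw [← normSq_eq_norm_sq, normSq_apply]
    simp
    nlinarith
  · rw [add_re, inv_one_add_mul_I_re]
    have : 1 / (1 + s ^ 2) ≤ 1 := div_le_one_of_le₀ (by nlinarith) (by positivity)
    simp
    linarith [one_div (1 + s ^ 2)]

lemma continuous_saddleKernel_one_add_mul_I (b : ℝ) :
    Continuous fun s : ℝ ↦ saddleKernel b (1 + s * I) := by
  have hne (s : ℝ) : (1 + s * I : ℂ) ≠ 0 := fun h ↦ by simpa using congrArg re h
  refine .mul (.cpow (by fun_prop) continuous_const fun s ↦ Or.inl (by simp)) ?_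
  exact .cexp (.mul continuous_const (.add (by fun_prop) (.inv₀ (by fun_prop) hne)))

lemma continuous_eulerProduct_inv_one_add_mul_I (hb : 0 < b) :
    Continuous fun s : ℝ ↦ (eulerProduct (cexp (-(24 * b * (1 + s * I)⁻¹))))⁻¹ := by
  have hne (s : ℝ) : (1 + s * I : ℂ) ≠ 0 := fun h ↦ by simpa using congrArg re h
  have hlt (s : ℝ) : ‖cexp (-(24 * b * (1 + s * I)⁻¹))‖ < 1 := by
    refine norm_exp_neg_lt_one ?_
    rw [show (24 * b * (1 + s * I)⁻¹ : ℂ) = ((24 * b : ℝ) : ℂ) * (1 + s * I)⁻¹ by push_cast; rfl,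
      re_ofReal_mul, inv_one_add_mul_I_re]
    positivity
  refine .inv₀ ?_ fun s ↦ eulerProduct_ne_zero (hlt s)
  refine differentiableOn_eulerProduct.continuousOn.comp_continuous ?_
    fun s ↦ mem_ball_zero_iff.2 (hlt s)
  exact .cexp (.neg (.mul continuous_const (.inv₀ (by fun_prop) hne)))

lemma eventually_norm_integral_saddleKernel_mul_sub_le : ∀ᶠ b : ℝ in atTop,
    ‖(∫ s in (-(√3 / 2))..(√3 / 2), saddleKernel b (1 + s * I) *
        (eulerProduct (cexp (-(24 * b * (1 + s * I)⁻¹))))⁻¹) -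
      ∫ s in (-(√3 / 2))..(√3 / 2), saddleKernel b (1 + s * I)‖ ≤ 2 * √3 * Real.exp b := by
  filter_upwards [eventually_norm_eulerProduct_inv_exp_sub_one_le, eventually_gt_atTop 0]
    with b hdual hb
  have hJ := continuous_saddleKernel_one_add_mul_I b
  have hE := continuous_eulerProduct_inv_one_add_mul_I hb
  have hJE := hJ.mul hE
  simp only [Pi.mul_def] at hJE
  rw [← intervalIntegral.integral_sub (hJE.intervalIntegrable _ _) (hJ.intervalIntegrable _ _)]
  have hpointwise : ∀ s ∈ Set.uIoc (-(√3 / 2)) (√3 / 2), ‖saddleKernel b (1 + s * I) *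
      (eulerProduct (cexp (-(24 * b * (1 + s * I)⁻¹))))⁻¹ - saddleKernel b (1 + s * I)‖ ≤
        2 * Real.exp b := by
    intro s hs
    rw [Set.uIoc_of_le (by linarith [Real.sqrt_nonneg 3])] at hs
    have hs2 : s ^ 2 ≤ 3 / 4 := by
      refine (sq_le_sq' hs.1.le hs.2).trans_eq ?_
      rw [div_pow, Real.sq_sqrt zero_le_three]
      norm_num
    have hre : 4 / 7 ≤ ((1 + s * I : ℂ)⁻¹).re := by
      rw [inv_one_add_mul_I_re, div_le_div_iff₀ (by norm_num) (by positivity)]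
      linarith
    rw [← mul_sub_one, norm_mul]
    calc _ ≤ 2 * Real.exp (2 * b) * Real.exp (-b) := by
          gcongr
          exacts [norm_saddleKernel_one_add_mul_I_le hb.le hs2, hdual _ hre]
      _ = 2 * Real.exp b := by
          rw [mul_assoc, ← Real.exp_add]
          ring_nf
  refine (intervalIntegral.norm_integral_le_of_norm_le_const hpointwise).trans_eq ?_
  rw [sub_neg_eq_add, add_halves, abs_of_nonneg (Real.sqrt_nonneg 3)]
  ring

lemma isBigO_re_integral_saddleKernel_mul_sub :
    (fun b : ℝ ↦ (∫ s in (-(√3 / 2))..(√3 / 2), saddleKernel b (1 + s * I) *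
        (eulerProduct (cexp (-(24 * b * (1 + s * I)⁻¹))))⁻¹).re -
      Real.exp (2 * b) * (√(π / b) * (1 - 1 / (2 * b)))) =O[atTop]
      fun b ↦ Real.exp (7 / 4 * b) := by
  refine (IsBigO.add (.of_bound (2 * √3) ?_) isBigO_re_integral_saddleKernel_sub).congr_left
    fun b ↦ sub_add_sub_cancel _ _ _
  filter_upwards [eventually_norm_integral_saddleKernel_mul_sub_le, eventually_ge_atTop 0]
    with b hdual hb
  rw [← sub_re, Real.norm_of_nonneg (Real.exp_pos _).le]
  refine (abs_re_le_norm _).trans (hdual.trans ?_)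
  gcongr
  linarith

lemma integral_cauchyIntegrand_majorArc {n : ℕ} (hn : n ≠ 0) :
    ∫ θ in (-(partitionAbscissa n * (√3 / 2)))..(partitionAbscissa n * (√3 / 2)),
        cauchyIntegrand n (partitionAbscissa n + θ * I) =
      ((partitionAbscissa n * √(partitionAbscissa n / (2 * π)) : ℝ) : ℂ) *
        ∫ s in (-(√3 / 2))..(√3 / 2), saddleKernel (partitionSaddle n) (1 + s * I) *
          (eulerProduct (cexp (-(24 * partitionSaddle n * (1 + s * I)⁻¹))))⁻¹ := by
  have hpoint (s : ℝ) : (partitionAbscissa n + (partitionAbscissa n * s : ℝ) * I : ℂ) =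
      partitionAbscissa n * (1 + s * I) := by
    push_cast
    ring
  rw [← mul_neg, ← intervalIntegral.smul_integral_comp_mul_left, real_smul, ofReal_mul, mul_assoc,
    ← intervalIntegral.integral_const_mul, ← intervalIntegral.integral_const_mul,
    ← intervalIntegral.integral_const_mul]
  refine intervalIntegral.integral_congr fun s _ ↦ ?_
  rw [hpoint, cauchyIntegrand_partitionAbscissa_mul hn (by simp)]

lemma partitionAbscissa_mul_sqrt_mul_eq {n : ℕ} (hn : n ≠ 0) :
    partitionAbscissa n * √(partitionAbscissa n / (2 * π)) * (Real.exp (2 * partitionSaddle n) *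
      (√(π / partitionSaddle n) * (1 - 1 / (2 * partitionSaddle n)))) =
      2 * π * partitionMainTerm n := by
  have hb := partitionSaddle_pos hn
  have hα := partitionAbscissa_pos hn
  have hy := natCast_sub_one_div_pos hn
  have hprod := partitionAbscissa_mul_partitionSaddle hn
  have hsub := partitionAbscissa_mul_sub hn
  rw [partitionMainTerm]
  generalize (n - 1 / 24 : ℝ) = y at hy hsub ⊢
  have hconst : partitionAbscissa n * √(partitionAbscissa n / (2 * π)) * √(π / partitionSaddle n) =
      2 * π / (4 * √3 * y) := by
    rw [mul_assoc, ← Real.sqrt_mul (by positivity), ← sq_eq_sq₀ (by positivity) (by positivity),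
      mul_pow, Real.sq_sqrt (by positivity), div_pow, mul_pow, mul_pow, mul_pow,
      Real.sq_sqrt zero_le_three]
    field_simp
    linear_combination 48 * partitionAbscissa n * (partitionAbscissa n * y + partitionSaddle n) *
      hsub + 48 * partitionSaddle n * hprod
  linear_combination Real.exp (2 * partitionSaddle n) * (1 - 1 / (2 * partitionSaddle n)) * hconst

lemma isBigO_re_integral_majorArc_sub :
    (fun n ↦ (∫ θ in (-(partitionAbscissa n * (√3 / 2)))..(partitionAbscissa n * (√3 / 2)),
        cauchyIntegrand n (partitionAbscissa n + θ * I)).re - 2 * π * partitionMainTerm n)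
      =O[atTop] fun n ↦ Real.exp (7 / 4 * partitionSaddle n) := by
  have hbounded : (fun n ↦ partitionAbscissa n * √(partitionAbscissa n / (2 * π))) =O[atTop]
      fun _ ↦ (1 : ℝ) :=
    (tendsto_partitionAbscissa.mul (tendsto_partitionAbscissa.div_const _).sqrt).isBigO_one ℝ
  have hsaddle := hbounded.mul
    (isBigO_re_integral_saddleKernel_mul_sub.comp_tendsto tendsto_partitionSaddle)
  refine hsaddle.congr' ?_ (.of_forall fun n ↦ one_mul _)
  filter_upwards [eventually_ne_atTop 0] with n hn
  rw [integral_cauchyIntegrand_majorArc hn, re_ofReal_mul, ← partitionAbscissa_mul_sqrt_mul_eq hn,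
    ← mul_sub]
  rfl

end MajorArc

section MinorArc

lemma norm_one_sub_exp_neg_sq (α θ : ℝ) : ‖1 - cexp (-(α + θ * I))‖ ^ 2 =
    (1 - Real.exp (-α)) ^ 2 + 2 * Real.exp (-α) * (1 - Real.cos θ) := by
  have hexp : cexp (-(α + θ * I)) = Real.exp (-α) * (Real.cos θ - Real.sin θ * I) := by
    rw [neg_add, Complex.exp_add, ← neg_mul, exp_mul_I, Complex.cos_neg, Complex.sin_neg]
    push_cast
    ring
  rw [hexp, Complex.sq_norm, normSq_apply]
  simp only [sub_re, one_re, ofReal_re, mul_re, I_re, mul_zero, ofReal_im, I_im, mul_one, sub_self,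
    sub_zero, sub_im, one_im, mul_im, add_zero, zero_sub]
  linear_combination Real.exp (-α) ^ 2 * Real.sin_sq_add_cos_sq θ

variable {α θ : ℝ}

lemma mul_one_sub_exp_neg_le_norm_one_sub_exp_neg (hα : 0 < α) (hα' : α ≤ 1 / 2)
    (hθ : α * (√3 / 2) ≤ |θ|) (hθπ : |θ| ≤ π) :
    21 / 20 * (1 - Real.exp (-α)) ≤ ‖1 - cexp (-(α + θ * I))‖ := by
  refine le_of_sq_le_sq ?_ (norm_nonneg _)
  have hcos : 1 / 5 * θ ^ 2 ≤ 1 - Real.cos θ := by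
    have hfrac : 1 / 5 ≤ 2 / π ^ 2 := by
      rw [div_le_div_iff₀ (by norm_num) (by positivity)]
      nlinarith [Real.pi_lt_d2, Real.pi_pos]
    nlinarith [Real.cos_le_one_sub_mul_cos_sq hθπ, sq_nonneg θ]
  have hθ2 : 3 / 4 * α ^ 2 ≤ θ ^ 2 := by
    have h3 : √3 ^ 2 = (3 : ℝ) := Real.sq_sqrt zero_le_three
    have := pow_le_pow_left₀ (by positivity) hθ 2
    rw [sq_abs] at this
    nlinarith
  have hexp := Real.add_one_le_exp (-α)
  have hexp1 : Real.exp (-α) < 1 := Real.exp_lt_one_iff.2 (neg_lt_zero.2 hα)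
  have hsq : (1 - Real.exp (-α)) ^ 2 ≤ α ^ 2 := by nlinarith
  rw [norm_one_sub_exp_neg_sq]
  nlinarith

lemma norm_cauchyIntegrand_le_mul_exp (n : ℕ) (hα : 0 < α) (hα' : α ≤ 1 / 2)
    (hθ : α * (√3 / 2) ≤ |θ|) (hθπ : |θ| ≤ π) :
    ‖cauchyIntegrand n (α + θ * I)‖ ≤ ‖cauchyIntegrand n α‖ * Real.exp (-(1 / (42 * α))) := by
  set ρ := Real.exp (-α) with hρ
  have hρ1 : 0 < 1 - ρ := sub_pos.2 (Real.exp_lt_one_iff.2 (neg_lt_zero.2 hα))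
  have hnorm : ‖cexp (-(α + θ * I))‖ = ρ := by simp [norm_exp, hρ]
  have hgrowth : ‖cexp (n * (α + θ * I))‖ = ‖cexp (n * α)‖ := by simp [norm_exp]
  have hdist : ρ / ‖1 - cexp (-(α + θ * I))‖ ≤ ρ / (21 / 20 * (1 - ρ)) := by
    gcongr
    exact mul_one_sub_exp_neg_le_norm_one_sub_exp_neg hα hα' hθ hθπ
  have hgap : 1 / (42 * α) ≤ ρ / (21 * (1 - ρ)) := by
    rw [div_le_div_iff₀ (by positivity) (by positivity)]
    nlinarith [Real.add_one_le_exp (-α)]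
  have hexponent : ρ / ‖1 - cexp (-(α + θ * I))‖ - ρ / (1 - ρ) ≤ -(1 / (42 * α)) := by
    have heq : ρ / (21 / 20 * (1 - ρ)) - ρ / (1 - ρ) = -(ρ / (21 * (1 - ρ))) := by
      field_simp
      ring
    linarith
  have heuler := norm_eulerProduct_inv_le (q := cexp (-(α + θ * I)))
    (norm_exp_neg_lt_one (by simpa using hα))
  rw [hnorm, hρ, ofReal_exp, ofReal_neg, ← hρ] at heuler
  rw [cauchyIntegrand, cauchyIntegrand, norm_mul, norm_mul, hgrowth, mul_right_comm]
  gcongr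
  exact heuler.trans (by gcongr)

lemma eventually_norm_cauchyIntegrand_partitionAbscissa_le : ∀ᶠ n in atTop,
    ‖cauchyIntegrand n (partitionAbscissa n)‖ ≤ 2 * Real.exp (2 * partitionSaddle n) := by
  filter_upwards [eventually_ne_atTop 0, tendsto_partitionAbscissa.eventually_le_const one_pos,
    tendsto_partitionSaddle.eventually eventually_norm_eulerProduct_inv_exp_sub_one_le]
    with n hn hα hdual
  have hfactor : √(partitionAbscissa n / (2 * π)) ≤ 1 := by
    refine Real.sqrt_le_one.2 (div_le_one_of_le₀ ?_ (by positivity))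
    linarith [Real.pi_gt_three]
  have heuler : ‖(eulerProduct (cexp (-(24 * partitionSaddle n * 1⁻¹))))⁻¹‖ ≤ 2 := by
    have htriangle := norm_le_norm_add_norm_sub'
      (eulerProduct (cexp (-(24 * partitionSaddle n * 1⁻¹))))⁻¹ 1
    have hsub := hdual 1⁻¹ (by norm_num)
    have hexp : Real.exp (-partitionSaddle n) ≤ 1 :=
      Real.exp_le_one_iff.2 (neg_nonpos.2 (partitionSaddle_pos hn).le)
    rw [norm_one] at htriangle
    linarith
  have hkernel : ‖saddleKernel (partitionSaddle n) 1‖ = Real.exp (2 * partitionSaddle n) := by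
    rw [saddleKernel, one_cpow, one_mul, norm_exp, re_ofReal_mul]
    norm_num
    ring
  rw [← mul_one (partitionAbscissa n : ℂ), cauchyIntegrand_partitionAbscissa_mul hn (by simp),
    norm_mul, norm_mul, hkernel, norm_real, Real.norm_of_nonneg (Real.sqrt_nonneg _),
    mul_comm 2 (Real.exp _)]
  refine (mul_le_of_le_one_left (by positivity) hfactor).trans ?_
  gcongr

lemma eventually_norm_cauchyIntegrand_minorArc_le : ∀ᶠ n in atTop, ∀ θ : ℝ,
    partitionAbscissa n * (√3 / 2) ≤ |θ| → |θ| ≤ π →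
      ‖cauchyIntegrand n (partitionAbscissa n + θ * I)‖ ≤
        2 * Real.exp (139 / 70 * partitionSaddle n) := by
  filter_upwards [eventually_ne_atTop 0, tendsto_partitionAbscissa.eventually_le_const one_half_pos,
    eventually_norm_cauchyIntegrand_partitionAbscissa_le] with n hn hα' hcenter θ hθ hθπ
  have hα := partitionAbscissa_pos hn
  have hgap : partitionSaddle n / 70 ≤ 1 / (42 * partitionAbscissa n) := by
    rw [div_le_div_iff₀ (by norm_num) (by positivity)]
    nlinarith [partitionAbscissa_mul_partitionSaddle hn, Real.pi_lt_d2, Real.pi_pos]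
  calc _ ≤ ‖cauchyIntegrand n (partitionAbscissa n)‖ *
          Real.exp (-(1 / (42 * partitionAbscissa n))) :=
        norm_cauchyIntegrand_le_mul_exp n hα hα' hθ hθπ
    _ ≤ 2 * Real.exp (2 * partitionSaddle n) * Real.exp (-(partitionSaddle n / 70)) := by gcongr
    _ = 2 * Real.exp (139 / 70 * partitionSaddle n) := by
        rw [mul_assoc, ← Real.exp_add]
        ring_nf

lemma norm_integral_sub_integral_le_of_continuous {E : Type*} [NormedAddCommGroup E]
    [NormedSpace ℝ E] {f : ℝ → E} (hf : Continuous f) {δ R M : ℝ} (hδ : 0 ≤ δ) (hδR : δ ≤ R)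
    (hM : ∀ θ, δ ≤ |θ| → |θ| ≤ R → ‖f θ‖ ≤ M) :
    ‖(∫ θ in (-R)..R, f θ) - ∫ θ in (-δ)..δ, f θ‖ ≤ 2 * M * (R - δ) := by
  have hint (x y : ℝ) : IntervalIntegrable f MeasureTheory.volume x y := hf.intervalIntegrable x y
  have hleft : ‖∫ θ in (-R)..(-δ), f θ‖ ≤ M * (R - δ) := by
    refine (intervalIntegral.norm_integral_le_of_norm_le_const (C := M) fun θ hθ ↦ ?_).trans_eq ?_
    · rw [Set.uIoc_of_le (by linarith)] at hθ
      exact hM θ (le_abs.2 (.inr (by linarith [hθ.2])))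
        (abs_le.2 ⟨hθ.1.le, by linarith [hθ.2]⟩)
    · rw [abs_of_nonneg (by linarith)]
      ring
  have hright : ‖∫ θ in R..δ, f θ‖ ≤ M * (R - δ) := by
    refine (intervalIntegral.norm_integral_le_of_norm_le_const (C := M) fun θ hθ ↦ ?_).trans_eq ?_
    · rw [Set.uIoc_of_ge hδR] at hθ
      exact hM θ (le_abs.2 (.inl hθ.1.le)) (abs_le.2 ⟨by linarith [hθ.1], hθ.2⟩)
    · rw [abs_of_nonpos (by linarith), neg_sub]
  rw [intervalIntegral.integral_interval_sub_interval_comm (hint _ _) (hint _ _) (hint _ _)]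
  refine (norm_sub_le _ _).trans ?_
  linarith

lemma isBigO_integral_cauchyIntegrand_sub_majorArc :
    (fun n ↦ (∫ θ in (-π)..π, cauchyIntegrand n (partitionAbscissa n + θ * I)) -
      ∫ θ in (-(partitionAbscissa n * (√3 / 2)))..(partitionAbscissa n * (√3 / 2)),
        cauchyIntegrand n (partitionAbscissa n + θ * I))
      =O[atTop] fun n ↦ Real.exp (139 / 70 * partitionSaddle n) := by
  refine .of_bound (4 * π) ?_
  filter_upwards [eventually_ne_atTop 0, tendsto_partitionAbscissa.eventually_le_const one_pos,
    eventually_norm_cauchyIntegrand_minorArc_le] with n hn hα hminor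
  have hα0 := partitionAbscissa_pos hn
  have hle : partitionAbscissa n * (√3 / 2) ≤ π := by
    have : √3 ≤ 2 := (Real.sqrt_le_left zero_le_two).2 (by norm_num)
    nlinarith [Real.pi_gt_three]
  refine (norm_integral_sub_integral_le_of_continuous (continuous_cauchyIntegrand hα0 n)
    (by positivity) hle hminor).trans ?_
  rw [Real.norm_of_nonneg (Real.exp_pos _).le]
  calc _ ≤ 2 * (2 * Real.exp (139 / 70 * partitionSaddle n)) * π := by
        gcongr
        exact sub_le_self _ (by positivity)
    _ = 4 * π * Real.exp (139 / 70 * partitionSaddle n) := by ring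

end MinorArc

theorem isBigO_card_partition_sub_partitionMainTerm :
    (fun n : ℕ ↦ (Fintype.card n.Partition : ℝ) - partitionMainTerm n)
      =O[atTop] fun n ↦ Real.exp (139 / 70 * partitionSaddle n) := by
  have hexp : (fun n ↦ Real.exp (7 / 4 * partitionSaddle n)) =O[atTop]
      fun n ↦ Real.exp (139 / 70 * partitionSaddle n) := by
    refine .of_norm_eventuallyLE ?_
    filter_upwards [eventually_ne_atTop 0] with n hn
    rw [Real.norm_of_nonneg (Real.exp_pos _).le, Real.exp_le_exp]
    linarith [partitionSaddle_pos hn]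
  have hminor := (IsBigO.of_norm_le (f := fun n ↦ re _) fun n ↦ abs_re_le_norm _).trans
    isBigO_integral_cauchyIntegrand_sub_majorArc.norm_left
  refine ((hminor.add (isBigO_re_integral_majorArc_sub.trans hexp)).const_mul_left
    (2 * π)⁻¹).congr' ?_ .rfl
  filter_upwards [eventually_ne_atTop 0] with n hn
  have hcauchy := congrArg re (integral_cauchyIntegrand (partitionAbscissa_pos hn) n)
  rw [show (2 * π * Fintype.card n.Partition : ℂ) = (2 * π * Fintype.card n.Partition : ℝ) by
    push_cast; rfl, ofReal_re] at hcauchy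
  rw [sub_re, hcauchy, sub_add_sub_cancel, ← mul_sub, inv_mul_cancel_left₀ Real.two_pi_pos.ne']

end CircleMethod

section ForwardDifferences

lemma fwdDiff_iter_natCast_add {R G : Type*} [AddCommMonoidWithOne R] [AddCommGroup G]
    (f : R → G) (c : R) (r n : ℕ) :
    (fwdDiff 1)^[r] (fun m : ℕ ↦ f (m + c)) n = (fwdDiff 1)^[r] f (n + c) := by
  simp only [fwdDiff_iter_eq_sum_shift]
  refine sum_congr rfl fun k _ ↦ ?_
  simp only [mul_one, Nat.cast_add, smul_eq_mul, nsmul_one, add_right_comm]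

lemma exists_fwdDiff_iter_eq (r : ℕ) {g : ℕ → ℝ → ℝ}
    (hg : ∀ k, ∀ y : ℝ, 0 < y → HasDerivAt (g k) (g (k + 1) y) y) {x : ℝ} (hx : 0 < x) :
    ∃ ξ ∈ Set.Icc x (x + r), (fwdDiff 1)^[r] (g 0) x = g r ξ := by
  induction r generalizing g with
  | zero => exact ⟨x, by simp, rfl⟩
  | succ r ih =>
    obtain ⟨ξ, hξ, h⟩ := ih (g := fun k ↦ fwdDiff 1 (g k)) fun k y hy ↦
      ((hg k (y + 1) (by positivity)).comp_add_const y 1).sub (hg k y hy)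
    have hξ0 : 0 < ξ := hx.trans_le hξ.1
    obtain ⟨η, hη, h'⟩ := exists_hasDerivAt_eq_slope (g r) (g (r + 1)) (lt_add_one ξ)
      (fun y hy ↦ (hg r y (hξ0.trans_le hy.1)).continuousAt.continuousWithinAt)
      (fun y hy ↦ hg r y (hξ0.trans hy.1))
    refine ⟨η, ⟨hξ.1.trans hη.1.le, ?_⟩, ?_⟩
    · push_cast
      linarith [hξ.2, hη.2]
    · rw [Function.iterate_succ_apply, h, h', fwdDiff]
      ring

lemma isLittleO_natCast_rpow_rpow {a b : ℝ} (h : a < b) :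
    (fun n : ℕ ↦ (n : ℝ) ^ a) =o[atTop] fun n : ℕ ↦ (n : ℝ) ^ b := by
  have h0 := (tendsto_rpow_neg_atTop (sub_pos.2 h)).comp
    (tendsto_natCast_atTop_atTop (R := ℝ))
  refine (((isLittleO_one_iff ℝ).2 h0).mul_isBigO
    (isBigO_refl (fun n : ℕ ↦ (n : ℝ) ^ b) atTop)).congr' ?_ (by simp)
  filter_upwards [eventually_gt_atTop 0] with n hn
  rw [Function.comp_apply, ← Real.rpow_add (by positivity)]
  ring_nf

lemma isBigO_rpow_sub_natCast_rpow {ξ : ℕ → ℝ}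
    (hξ : (fun n : ℕ ↦ ξ n - n) =O[atTop] fun _ ↦ (1 : ℝ)) (a : ℝ) :
    (fun n : ℕ ↦ ξ n ^ a - (n : ℝ) ^ a) =O[atTop] fun n : ℕ ↦ (n : ℝ) ^ (a - 1) := by
  have hratio : (fun n : ℕ ↦ ξ n / n - 1) =O[atTop] fun n : ℕ ↦ (n : ℝ)⁻¹ := by
    refine (hξ.mul (isBigO_refl (fun n : ℕ ↦ (n : ℝ)⁻¹) atTop)).congr' ?_ (by simp)
    filter_upwards [eventually_gt_atTop 0] with n hn
    field_simp
  have hlim : Tendsto (fun n : ℕ ↦ ξ n / n) atTop (𝓝 1) :=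
    tendsto_sub_nhds_zero_iff.1 (hratio.trans_tendsto tendsto_inv_atTop_nhds_zero_nat)
  have hderiv : (fun n : ℕ ↦ (ξ n / n) ^ a - 1) =O[atTop] fun n : ℕ ↦ (n : ℝ)⁻¹ := by
    have h := (Real.hasDerivAt_rpow_const (x := 1) (p := a) (.inl one_ne_zero)).isBigO_sub
    simpa using! (h.comp_tendsto hlim).trans hratio
  refine ((isBigO_refl (fun n : ℕ ↦ (n : ℝ) ^ a) atTop).mul hderiv).congr' ?_ ?_
  · filter_upwards [eventually_gt_atTop 0, hlim.eventually_const_le one_pos] with n hn h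
    have hn' : (0 : ℝ) < n := by positivity
    have hξn : 0 ≤ ξ n := by
      by_contra! hneg
      linarith [div_neg_of_neg_of_pos hneg hn']
    rw [Real.div_rpow hξn hn'.le]
    field_simp
  · filter_upwards [eventually_gt_atTop 0] with n hn
    rw [Real.rpow_sub_one (by positivity), div_eq_mul_inv]

lemma isBigO_natCast_add_rpow (c a : ℝ) :
    (fun n : ℕ ↦ (n + c) ^ a) =O[atTop] fun n : ℕ ↦ (n : ℝ) ^ a := by
  have h : (fun n : ℕ ↦ (n + c) - n) =O[atTop] fun _ ↦ (1 : ℝ) := by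
    simpa using isBigO_const_const c (one_ne_zero (α := ℝ)) (atTop : Filter ℕ)
  simpa using ((isBigO_rpow_sub_natCast_rpow h a).trans
    (isLittleO_natCast_rpow_rpow (sub_one_lt a)).isBigO).add (isBigO_refl _ _)

lemma isBigO_fwdDiff_iter_sub_of_hasDerivAt {g : ℕ → ℝ → ℝ}
    (hg : ∀ k, ∀ y : ℝ, 0 < y → HasDerivAt (g k) (g (k + 1) y) y) {r : ℕ} {C a : ℝ}
    (hr : ∀ y, g r y = C * y ^ a) (c : ℝ) :
    (fun n : ℕ ↦ (fwdDiff 1)^[r] (fun m : ℕ ↦ g 0 (m + c)) n - C * (n : ℝ) ^ a)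
      =O[atTop] fun n : ℕ ↦ (n : ℝ) ^ (a - 1) := by
  have hmean (n : ℕ) : ∃ ξ : ℝ, 0 < n + c →
      ξ ∈ Set.Icc (n + c) (n + c + r) ∧ (fwdDiff 1)^[r] (g 0) (n + c) = C * ξ ^ a := by
    by_cases hn : 0 < n + c
    · obtain ⟨ξ, hξ, h⟩ := exists_fwdDiff_iter_eq r hg hn
      exact ⟨ξ, fun _ ↦ ⟨hξ, h.trans (hr ξ)⟩⟩
    · exact ⟨0, fun h ↦ absurd h hn⟩
  choose ξ hξ using hmean
  have hpos : ∀ᶠ n : ℕ in atTop, 0 < n + c :=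
    (tendsto_atTop_add_const_right _ c tendsto_natCast_atTop_atTop).eventually_gt_atTop 0
  have hbdd : (fun n : ℕ ↦ ξ n - n) =O[atTop] fun _ ↦ (1 : ℝ) := by
    refine .of_bound (|c| + r) ?_
    filter_upwards [hpos] with n hn
    obtain ⟨⟨hle, hge⟩, -⟩ := hξ n hn
    rw [norm_one, mul_one, Real.norm_eq_abs, abs_le]
    constructor <;> linarith [neg_abs_le c, le_abs_self c, (r.cast_nonneg : (0 : ℝ) ≤ r)]
  refine ((isBigO_rpow_sub_natCast_rpow hbdd a).const_mul_left C).congr' ?_ .rfl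
  filter_upwards [hpos] with n hn
  rw [fwdDiff_iter_natCast_add, (hξ n hn).2, mul_sub]

lemma isBigO_fwdDiff_iter_rpow_sub (a c : ℝ) (r : ℕ) :
    (fun n : ℕ ↦ (fwdDiff 1)^[r] (fun m : ℕ ↦ (m + c) ^ a) n -
      (∏ i ∈ range r, (a - i)) * (n : ℝ) ^ (a - r))
      =O[atTop] fun n : ℕ ↦ (n : ℝ) ^ (a - r - 1) := by
  have h := isBigO_fwdDiff_iter_sub_of_hasDerivAt (r := r)
    (g := fun k y ↦ (∏ i ∈ range k, (a - i)) * y ^ (a - k)) (fun k y hy ↦ ?_) (fun _ ↦ rfl) c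
  · simpa using h
  · have h := (Real.hasDerivAt_rpow_const (x := y) (p := a - k) (.inl hy.ne')).const_mul
      (∏ i ∈ range k, (a - i))
    convert! h using 1
    rw [prod_range_succ]
    push_cast
    ring_nf

lemma isBigO_fwdDiff_iter_succ_log_sub (c : ℝ) (m : ℕ) :
    (fun n : ℕ ↦ (fwdDiff 1)^[m + 1] (fun m : ℕ ↦ Real.log (m + c)) n -
      (-1) ^ m * m.factorial * (n : ℝ) ^ (-(m + 1) : ℝ))
      =O[atTop] fun n : ℕ ↦ (n : ℝ) ^ (-(m + 1) - 1 : ℝ) := by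
  refine isBigO_fwdDiff_iter_sub_of_hasDerivAt (r := m + 1)
    (g := fun k ↦ Nat.casesOn k Real.log fun k y ↦ (-1) ^ k * k.factorial * y ^ (-(k + 1) : ℝ))
    (fun k y hy ↦ ?_) (fun _ ↦ rfl) c
  cases k with
  | zero => simpa [Real.rpow_neg_one] using Real.hasDerivAt_log hy.ne'
  | succ k =>
    have h := (Real.hasDerivAt_rpow_const (x := y) (p := -(k + 1)) (.inl hy.ne')).const_mul
      ((-1) ^ k * (k.factorial : ℝ))
    convert! h using 1
    simp only [Nat.factorial_succ]
    push_cast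
    ring_nf

lemma isLittleO_fwdDiff_iter {E F : Type*} [NormedAddCommGroup E] [NormedAddCommGroup F]
    {f : ℕ → E} {g : ℕ → F} (hg : (fun n ↦ g (n + 1)) =O[atTop] g) (hf : f =o[atTop] g) (r : ℕ) :
    (fwdDiff 1)^[r] f =o[atTop] g := by
  induction r with
  | zero => exact hf
  | succ r ih =>
    rw [Function.iterate_succ_apply']
    exact ((ih.comp_tendsto (tendsto_add_atTop_nat 1)).trans_isBigO hg).sub ih

lemma fwdDiff_iter_succ_const {M G : Type*} [AddCommMonoid M] [AddCommGroup G] (h : M) (c : G)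
    (r : ℕ) : (fwdDiff h)^[r + 1] (fun _ : M ↦ c) = 0 := by
  rw [Function.iterate_succ_apply, fwdDiff_const]
  exact Function.iterate_fixed (fwdDiff_const h (0 : G)) r

end ForwardDifferences

section LogPartition

lemma isBigO_log_sub_log {ι : Type*} {l : Filter ι} {f g : ι → ℝ}
    (h : Tendsto (fun x ↦ f x / g x) l (𝓝 1)) :
    (fun x ↦ Real.log (f x) - Real.log (g x)) =O[l] fun x ↦ f x / g x - 1 := by
  refine ((Real.hasDerivAt_log one_ne_zero).isBigO_sub.comp_tendsto h).congr' ?_ .rfl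
  filter_upwards [h.eventually_ne one_ne_zero] with x hx
  rw [Function.comp_apply, Real.log_one, sub_zero,
    Real.log_div (div_ne_zero_iff.1 hx).1 (div_ne_zero_iff.1 hx).2]

lemma isBigO_log_one_sub_add_sum (k : ℕ) :
    (fun u : ℝ ↦ Real.log (1 - u) + ∑ i ∈ range k, u ^ (i + 1) / (i + 1))
      =O[𝓝 0] fun u ↦ u ^ (k + 1) := by
  refine .of_bound 2 ?_
  filter_upwards [Metric.ball_mem_nhds (0 : ℝ) (by norm_num : (0 : ℝ) < 1 / 2)] with u hu
  rw [mem_ball_zero_iff, Real.norm_eq_abs] at hu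
  rw [Real.norm_eq_abs, add_comm, norm_pow, Real.norm_eq_abs]
  refine (Real.abs_log_sub_add_sum_range_le (by linarith) k).trans ?_
  rw [div_le_iff₀ (by linarith)]
  nlinarith [pow_nonneg (abs_nonneg u) (k + 1)]

lemma tendsto_one_div_two_mul_partitionSaddle :
    Tendsto (fun n ↦ 1 / (2 * partitionSaddle n)) atTop (𝓝 0) :=
  (tendsto_partitionSaddle.const_mul_atTop zero_lt_two).const_div_atTop 1

lemma isBigO_inv_partitionMainTerm : (fun n ↦ (partitionMainTerm n)⁻¹) =O[atTop]
    fun n ↦ partitionSaddle n ^ 2 * Real.exp (-(2 * partitionSaddle n)) := by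
  have hone : (fun n ↦ (1 - 1 / (2 * partitionSaddle n))⁻¹) =O[atTop] fun _ ↦ (1 : ℝ) := by
    refine Tendsto.isBigO_one ℝ (c := (1 - 0)⁻¹) ?_
    exact (tendsto_one_div_two_mul_partitionSaddle.const_sub 1).inv₀ (by norm_num)
  refine (((isBigO_refl (fun n ↦ partitionSaddle n ^ 2 * Real.exp (-(2 * partitionSaddle n)))
    atTop).mul hone).const_mul_left (24 * √3 / π ^ 2)).congr' ?_ (by simp)
  filter_upwards [eventually_ne_atTop 0] with n hn
  rw [partitionMainTerm, partitionSaddle_sq hn, Real.exp_neg, mul_inv, inv_div]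
  field_simp
  ring

lemma isBigO_card_partition_div_partitionMainTerm_sub_one :
    (fun n : ℕ ↦ Fintype.card n.Partition / partitionMainTerm n - 1) =O[atTop]
      fun n ↦ partitionSaddle n ^ 2 * Real.exp (-(1 / 70) * partitionSaddle n) := by
  have hne : ∀ᶠ n in atTop, partitionMainTerm n ≠ 0 := by
    filter_upwards [eventually_ne_atTop 0,
      tendsto_one_div_two_mul_partitionSaddle.eventually_lt_const one_pos] with n hn h
    have hy := natCast_sub_one_div_pos hn
    rw [partitionMainTerm]
    exact mul_ne_zero (by positivity) (by linarith)
  refine (isBigO_card_partition_sub_partitionMainTerm.mul isBigO_inv_partitionMainTerm).congr' ?_ ?_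
  · filter_upwards [hne] with n hn
    rw [sub_mul, mul_inv_cancel₀ hn, div_eq_mul_inv]
  · refine .of_forall fun n ↦ ?_
    dsimp only
    rw [mul_left_comm, ← Real.exp_add]
    ring_nf

lemma isLittleO_partitionSaddle_sq_mul_exp_neg (s : ℝ) :
    (fun n ↦ partitionSaddle n ^ 2 * Real.exp (-(1 / 70) * partitionSaddle n)) =o[atTop]
      fun n : ℕ ↦ (n : ℝ) ^ s := by
  have h : (fun x : ℝ ↦ x ^ 2 * Real.exp (-(1 / 70) * x)) =o[atTop] fun x ↦ x ^ (2 * s) := by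
    refine ((isBigO_refl (fun x : ℝ ↦ x ^ 2) atTop).mul_isLittleO
      (isLittleO_exp_neg_mul_rpow_atTop (a := 1 / 70) (by norm_num) (2 * s - 2))).congr' .rfl ?_
    filter_upwards [eventually_gt_atTop 0] with x hx
    rw [← Real.rpow_natCast, ← Real.rpow_add hx]
    norm_num
  refine (h.comp_tendsto tendsto_partitionSaddle).trans_isBigO
    (((isBigO_natCast_add_rpow (-(1 / 24)) s).const_mul_left ((π ^ 2 / 6) ^ s)).congr' ?_ .rfl)
  filter_upwards [eventually_ne_atTop 0] with n hn
  rw [Function.comp_apply, Real.rpow_mul (partitionSaddle_pos hn).le, Real.rpow_two,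
    partitionSaddle_sq hn, Real.mul_rpow (by positivity) (natCast_sub_one_div_pos hn).le,
    sub_eq_add_neg]

lemma isLittleO_log_card_partition_sub_log_partitionMainTerm (s : ℝ) :
    (fun n : ℕ ↦ Real.log (Fintype.card n.Partition) - Real.log (partitionMainTerm n))
      =o[atTop] fun n : ℕ ↦ (n : ℝ) ^ s := by
  have h (t : ℝ) := isBigO_card_partition_div_partitionMainTerm_sub_one.trans_isLittleO
    (isLittleO_partitionSaddle_sq_mul_exp_neg t)
  have h0 := h 0
  simp only [Real.rpow_zero, isLittleO_one_iff] at h0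
  exact (isBigO_log_sub_log (tendsto_sub_nhds_zero_iff.1 h0)).trans_isLittleO (h s)

/-- The `k`-th partial sum of the asymptotic expansion of `log p(n)` in powers of
`(n - 1 / 24) ^ (-1 / 2)`, obtained by expanding the logarithm of `partitionMainTerm n`. -/
noncomputable def logPartitionExpansion (k n : ℕ) : ℝ :=
  -Real.log (4 * √3) + √6 * π / 3 * (n - 1 / 24) ^ (1 / 2 : ℝ) - Real.log (n - 1 / 24) -
    ∑ i ∈ range k, (√6 / (2 * π)) ^ (i + 1) / (i + 1) * (n - 1 / 24) ^ (-(i + 1) / 2 : ℝ)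

lemma one_div_two_mul_partitionSaddle_pow {n : ℕ} (hn : n ≠ 0) (i : ℕ) :
    (1 / (2 * partitionSaddle n)) ^ i =
      (√6 / (2 * π)) ^ i * (n - 1 / 24) ^ (-i / 2 : ℝ) := by
  have hy := natCast_sub_one_div_pos hn
  have h : 1 / (2 * partitionSaddle n) = √6 / (2 * π) * (n - 1 / 24) ^ (-(1 / 2) : ℝ) := by
    have h6 : √6 ^ 2 = 6 := Real.sq_sqrt (by norm_num)
    rw [partitionSaddle, Real.rpow_neg hy.le, ← Real.sqrt_eq_rpow]
    have := Real.sqrt_pos.2 hy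
    field_simp
    rw [h6]
  rw [h, mul_pow, ← Real.rpow_mul_natCast hy.le]
  ring_nf

lemma log_partitionMainTerm {n : ℕ} (hn : n ≠ 0) (h : 1 / (2 * partitionSaddle n) < 1) :
    Real.log (partitionMainTerm n) = 2 * partitionSaddle n - Real.log (4 * √3) -
      Real.log (n - 1 / 24) + Real.log (1 - 1 / (2 * partitionSaddle n)) := by
  have hy := natCast_sub_one_div_pos hn
  rw [partitionMainTerm, Real.log_mul (by positivity) (by linarith),
    Real.log_div (by positivity) (by positivity), Real.log_exp,
    Real.log_mul (by positivity) hy.ne']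
  ring

lemma isBigO_log_card_partition_sub_logPartitionExpansion (k : ℕ) :
    (fun n : ℕ ↦ Real.log (Fintype.card n.Partition) - logPartitionExpansion k n)
      =O[atTop] fun n : ℕ ↦ (n : ℝ) ^ (-(k + 1) / 2 : ℝ) := by
  have htail : (fun n ↦ (1 / (2 * partitionSaddle n)) ^ (k + 1))
      =O[atTop] fun n : ℕ ↦ (n : ℝ) ^ (-(k + 1) / 2 : ℝ) := by
    refine ((isBigO_natCast_add_rpow (-(1 / 24)) _).const_mul_left
      ((√6 / (2 * π)) ^ (k + 1))).congr' ?_ .rfl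
    filter_upwards [eventually_ne_atTop 0] with n hn
    rw [one_div_two_mul_partitionSaddle_pow hn, sub_eq_add_neg]
    push_cast
    rfl
  refine ((isLittleO_log_card_partition_sub_log_partitionMainTerm _).isBigO.add
    (((isBigO_log_one_sub_add_sum k).comp_tendsto
      tendsto_one_div_two_mul_partitionSaddle).trans htail)).congr' ?_ .rfl
  filter_upwards [eventually_ne_atTop 0,
    tendsto_one_div_two_mul_partitionSaddle.eventually_lt_const one_pos] with n hn h
  have hsum : ∑ i ∈ range k, (1 / (2 * partitionSaddle n)) ^ (i + 1) / (i + 1) =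
      ∑ i ∈ range k, (√6 / (2 * π)) ^ (i + 1) / (i + 1) * (n - 1 / 24) ^ (-(i + 1) / 2 : ℝ) := by
    refine sum_congr rfl fun i _ ↦ ?_
    rw [one_div_two_mul_partitionSaddle_pow hn]
    push_cast
    ring
  rw [Function.comp_apply, hsum, log_partitionMainTerm hn h, logPartitionExpansion,
    ← Real.sqrt_eq_rpow, partitionSaddle]
  ring

end LogPartition

section LogPartitionDifferences

lemma neg_one_pow_mul_prod_half_sub (m : ℕ) :
    (-1 : ℝ) ^ m * ∏ i ∈ range (m + 1), ((1 / 2 : ℝ) - i) =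
      1 / 2 * ∏ i ∈ range m, ((1 / 2 : ℝ) + i) := by
  rw [prod_range_succ', ← mul_assoc, ← card_range m, ← prod_const, card_range, ← prod_mul_distrib,
    mul_comm]
  congr 1
  · simp
  · refine prod_congr rfl fun i _ ↦ ?_
    push_cast
    ring

lemma fwdDiff_iter_succ_logPartitionExpansion (k m n : ℕ) :
    (fwdDiff 1)^[m + 1] (logPartitionExpansion k) n =
      √6 * π / 3 * (fwdDiff 1)^[m + 1] (fun j : ℕ ↦ ((j : ℝ) + -(1 / 24)) ^ (1 / 2 : ℝ)) n -
      (fwdDiff 1)^[m + 1] (fun j : ℕ ↦ Real.log ((j : ℝ) + -(1 / 24))) n -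
      ∑ i ∈ range k, (√6 / (2 * π)) ^ (i + 1) / (i + 1) *
        (fwdDiff 1)^[m + 1] (fun j : ℕ ↦ ((j : ℝ) + -(1 / 24)) ^ (-(i + 1) / 2 : ℝ)) n := by
  have hsplit : logPartitionExpansion k = (fun _ ↦ -Real.log (4 * √3)) +
      ((√6 * π / 3) • (fun j : ℕ ↦ ((j : ℝ) + -(1 / 24)) ^ (1 / 2 : ℝ)) +
      ((-1 : ℝ) • (fun j : ℕ ↦ Real.log ((j : ℝ) + -(1 / 24))) + ∑ i ∈ range k,
        (-((√6 / (2 * π)) ^ (i + 1) / (i + 1))) •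
          fun j : ℕ ↦ ((j : ℝ) + -(1 / 24)) ^ (-(i + 1) / 2 : ℝ))) := by
    funext j
    simp only [logPartitionExpansion, Pi.add_apply, Pi.smul_apply, Finset.sum_apply, smul_eq_mul,
      neg_mul, sum_neg_distrib, sub_eq_add_neg]
    ring
  rw [hsplit]
  simp only [fwdDiff_iter_add, fwdDiff_iter_const_smul, fwdDiff_iter_finsetSum,
    fwdDiff_iter_succ_const, Pi.add_apply, Pi.smul_apply, Finset.sum_apply, smul_eq_mul,
    Pi.zero_apply, neg_mul, sum_neg_distrib]
  ring

lemma isLittleO_fwdDiff_iter_rpow_of_neg {a : ℝ} (ha : a < 0) (c : ℝ) (r : ℕ) :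
    (fwdDiff 1)^[r] (fun n : ℕ ↦ (n + c) ^ a) =o[atTop] fun n : ℕ ↦ (n : ℝ) ^ (-r : ℝ) := by
  have h := ((isBigO_fwdDiff_iter_rpow_sub a c r).trans_isLittleO
    (isLittleO_natCast_rpow_rpow (by linarith : a - r - 1 < -r))).add
    ((isLittleO_natCast_rpow_rpow (by linarith : a - r < -r)).const_mul_left
      (∏ i ∈ range r, (a - i)))
  simpa only [sub_add_cancel] using h

lemma isLittleO_fwdDiff_iter_succ_logPartitionExpansion_sub (k m : ℕ) :
    (fun n ↦ (-1) ^ m * (fwdDiff 1)^[m + 1] (logPartitionExpansion k) n -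
      (√6 * π / 6 * (∏ i ∈ range m, ((1 / 2 : ℝ) + i)) * (n : ℝ) ^ (-(m + 1 / 2) : ℝ) -
        m.factorial * (n : ℝ) ^ (-(m + 1) : ℝ)))
      =o[atTop] fun n : ℕ ↦ (n : ℝ) ^ (-(m + 1) : ℝ) := by
  have hhalf := (isBigO_fwdDiff_iter_rpow_sub (1 / 2) (-(1 / 24)) (m + 1)).trans_isLittleO
    (isLittleO_natCast_rpow_rpow (b := -(m + 1)) (by push_cast; linarith))
  have hlog := (isBigO_fwdDiff_iter_succ_log_sub (-(1 / 24)) m).trans_isLittleO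
    (isLittleO_natCast_rpow_rpow (sub_one_lt _))
  have hsum := IsLittleO.fun_sum (s := range k) fun i _ ↦
    (isLittleO_fwdDiff_iter_rpow_of_neg (a := -(i + 1) / 2)
      (by rw [neg_div]; exact neg_neg_of_pos (by positivity)) (-(1 / 24))
      (m + 1)).const_mul_left ((√6 / (2 * π)) ^ (i + 1) / (i + 1))
  push_cast at hhalf hsum
  refine ((((hhalf.const_mul_left (√6 * π / 3)).sub hlog).sub hsum).const_mul_left
    ((-1) ^ m)).congr_left fun n ↦ ?_
  have hsign : (-1 : ℝ) ^ m * (-1) ^ m = 1 := by simp [← mul_pow]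
  rw [fwdDiff_iter_succ_logPartitionExpansion,
    show (1 / 2 - (m + 1) : ℝ) = -(m + 1 / 2) by ring]
  linear_combination
    -(√6 * π / 3 * (n : ℝ) ^ (-(m + 1 / 2) : ℝ)) * neg_one_pow_mul_prod_half_sub m +
      m.factorial * (n : ℝ) ^ (-(m + 1) : ℝ) * hsign

lemma isLittleO_fwdDiff_iter_succ_log_card_partition_sub (m : ℕ) :
    (fun n : ℕ ↦ (-1) ^ m *
        (fwdDiff 1)^[m + 1] (fun j : ℕ ↦ Real.log (Fintype.card j.Partition)) n -
      (√6 * π / 6 * (∏ i ∈ range m, ((1 / 2 : ℝ) + i)) * (n + 1) ^ (-(m + 1 / 2) : ℝ) -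
        m.factorial * (n : ℝ) ^ (-(m + 1) : ℝ)))
      =o[atTop] fun n : ℕ ↦ (n : ℝ) ^ (-(m + 1) : ℝ) := by
  have hshift : (fun n : ℕ ↦ (n + 1 : ℝ) ^ (-(m + 1 / 2) : ℝ) - (n : ℝ) ^ (-(m + 1 / 2) : ℝ))
      =o[atTop] fun n : ℕ ↦ (n : ℝ) ^ (-(m + 1) : ℝ) :=
    (isBigO_rpow_sub_natCast_rpow (ξ := fun n ↦ n + 1)
      (by simpa using isBigO_refl (fun _ : ℕ ↦ (1 : ℝ)) atTop) _).trans_isLittleO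
      (isLittleO_natCast_rpow_rpow (by linarith))
  have herror := isLittleO_fwdDiff_iter
    (by simpa using isBigO_natCast_add_rpow 1 (-(m + 1)))
    ((isBigO_log_card_partition_sub_logPartitionExpansion (2 * (m + 1))).trans_isLittleO
      (isLittleO_natCast_rpow_rpow (b := -(m + 1)) (by push_cast; linarith))) (m + 1)
  refine (((herror.const_mul_left ((-1) ^ m)).add
    (isLittleO_fwdDiff_iter_succ_logPartitionExpansion_sub (2 * (m + 1)) m)).sub
    (hshift.const_mul_left (√6 * π / 6 * ∏ i ∈ range m, ((1 / 2 : ℝ) + i)))).congr_left fun n ↦ ?_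
  have hdecomp : (fun j : ℕ ↦ Real.log (Fintype.card j.Partition)) =
      (fun j : ℕ ↦ Real.log (Fintype.card j.Partition) - logPartitionExpansion (2 * (m + 1)) j) +
        logPartitionExpansion (2 * (m + 1)) := by
    funext j
    simp
  rw [hdecomp, fwdDiff_iter_add, Pi.add_apply]
  ring

/-- For `m = 0` this is `π ^ 2 / 12 < 1`, while for `m ≥ 1` the left-hand side is of smaller order
than the right-hand side. -/
lemma exists_eventually_sq_div_two_le (m : ℕ) : ∃ κ < (m.factorial : ℝ), ∀ᶠ n : ℕ in atTop,
    (√6 * π / 6 * (∏ i ∈ range m, ((1 / 2 : ℝ) + i)) * (n + 1) ^ (-(m + 1 / 2) : ℝ)) ^ 2 / 2 ≤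
      κ * (n : ℝ) ^ (-(m + 1) : ℝ) := by
  set a := √6 * π / 6 * ∏ i ∈ range m, ((1 / 2 : ℝ) + i) with ha
  have hsq (n : ℕ) : (((n : ℝ) + 1) ^ (-(m + 1 / 2) : ℝ)) ^ 2 =
      ((n : ℝ) + 1) ^ (-(2 * m + 1) : ℝ) := by
    rw [← Real.rpow_mul_natCast (by positivity)]
    push_cast
    ring_nf
  simp only [mul_pow, hsq]
  rcases Nat.eq_zero_or_pos m with rfl | hm
  · have ha2 : a ^ 2 = π ^ 2 / 6 := by
      rw [ha, range_zero, prod_empty, mul_one, div_pow, mul_pow, Real.sq_sqrt (by norm_num)]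
      ring
    refine ⟨π ^ 2 / 12, ?_, ?_⟩
    · norm_num
      nlinarith [Real.pi_lt_d2, Real.pi_pos]
    · filter_upwards [eventually_gt_atTop 0] with n hn
      have hn' : (0 : ℝ) < n := by positivity
      have hle : ((n : ℝ) + 1) ^ (-1 : ℝ) ≤ (n : ℝ) ^ (-1 : ℝ) :=
        Real.rpow_le_rpow_of_nonpos hn' (by linarith) (by norm_num)
      norm_num [ha2] at hle ⊢
      nlinarith [sq_nonneg π]
  · refine ⟨1 / 2, ?_, ?_⟩
    · have : (1 : ℝ) ≤ m.factorial := by exact_mod_cast m.factorial_pos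
      linarith
    · have hm' : (0 : ℝ) < m := by positivity
      have h := ((isBigO_natCast_add_rpow 1 (-(2 * m + 1))).trans_isLittleO
        (isLittleO_natCast_rpow_rpow (b := -(m + 1)) (by linarith))).const_mul_left (a ^ 2 / 2)
      filter_upwards [h.bound (by norm_num : (0 : ℝ) < 1 / 2)] with n hn
      rw [Real.norm_of_nonneg (by positivity), Real.norm_of_nonneg (by positivity)] at hn
      linarith

lemma sub_sq_div_two_lt_log_one_add {t : ℝ} (ht : 0 < t) : t - t ^ 2 / 2 < Real.log (1 + t) := by
  refine lt_of_lt_of_le ?_ (Real.le_log_one_add_of_nonneg ht.le)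
  rw [lt_div_iff₀ (by positivity)]
  nlinarith [pow_pos ht 3]

lemma eventually_fwdDiff_iter_log_card_partition_lt (m : ℕ) : ∀ᶠ n : ℕ in atTop,
    (-1) ^ m * (fwdDiff 1)^[m + 1] (fun j : ℕ ↦ Real.log (Fintype.card j.Partition)) n <
      Real.log (1 + √6 * π / 6 * (∏ i ∈ range m, ((1 / 2 : ℝ) + i)) *
        (n + 1) ^ (-(m + 1 / 2) : ℝ)) := by
  obtain ⟨κ, hκ, hsq⟩ := exists_eventually_sq_div_two_le m
  filter_upwards [hsq, (isLittleO_fwdDiff_iter_succ_log_card_partition_sub m).bound (sub_pos.2 hκ)]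
    with n hsq hdiff
  have hlog := sub_sq_div_two_lt_log_one_add (t := √6 * π / 6 *
    (∏ i ∈ range m, ((1 / 2 : ℝ) + i)) * (n + 1) ^ (-(m + 1 / 2) : ℝ)) (by positivity)
  rw [Real.norm_of_nonneg (by positivity : 0 ≤ (n : ℝ) ^ (-(m + 1) : ℝ))] at hdiff
  linarith [le_of_abs_le hdiff]

end LogPartitionDifferences

open Real in
theorem stmt_19 (p : ℕ → ℕ) (hp : ∀ n, p n = Fintype.card (Nat.Partition n))
    (r : ℕ) (hr : 1 ≤ r) :
    ∃ N : ℕ, 0 < N ∧ ∀ n : ℕ, N ≤ n →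
      (-1 : ℝ) ^ (r - 1) *
        ((fun g : ℕ → ℝ => fun m => g (m + 1) - g m)^[r] (fun m => Real.log (p m)) n) <
      Real.log (1 + (Real.sqrt 6 * π / 6) *
        (∏ i ∈ Finset.range (r - 1), ((1:ℝ)/2 + i)) / ((n : ℝ) + 1) ^ ((r : ℝ) - 1/2)) := by
  obtain ⟨m, rfl⟩ := Nat.exists_eq_add_of_le' hr
  obtain ⟨N, hN⟩ := Filter.eventually_atTop.1 (eventually_fwdDiff_iter_log_card_partition_lt m)
  refine ⟨N + 1, N.succ_pos, fun n hn ↦ ?_⟩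
  simp only [hp, Nat.add_sub_cancel]
  refine lt_of_lt_of_eq (hN n (by lia)) ?_
  rw [Real.rpow_neg (by positivity), ← div_eq_mul_inv]
  congr 4
  push_cast
  ring
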